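/- Let X and y be real numbers and k a natural number with y^k ≤ X^{1/2 − 1/log log X}. For any complex numbers a(q) indexed by odd primes q: Σ_{p ≤ X, p ≡ 1 (mod 8)} | Σ_{2 < q ≤ y, q prime} a(q) χ_p(q) / q^{1/2} |^{2k} ≪ [X log log X / log X] · [(2k)! / (2^k k!)] · ( Σ_{q ≤ y, q prime} |a(q)|^2 / q )^k, where the outer sum runs over primes p and the implied constant is absolute. -/

import Mathlib

/-!
The primes `p ≤ X` are majorised by a Selberg upper bound sieve weight `W` of level
`R = X ^ (1 / (12 log log X))`. Its total mass is `≪ X / log R`, which is `≪ X log log X / log X`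
(`selberg_majorant`), and the primes `p ≤ R` are bounded trivially. Expanding the `2k`-th power, one
has to sum `W n * (n / M)` over `n ≤ X`, where `M` is the product of `2k` odd primes `q ≤ y`.

If `M` is a square the sum is at most the mass of `W`. A tuple of `2k` primes has square product
only if its entries can be paired off, which gives the factor `(2k - 1)!! = (2k)! / (2^k k!)` and
the power `(∑ |a(q)|² / q) ^ k` (`sum_square_tuples_le`).

If `M` is not a square then `n ↦ (n / M)` is a nontrivial, possibly imprimitive, character, and
a form of the Pólya–Vinogradov inequality (`jacobi_sum_le`) bounds its sums by
`(1 + log M) ∑_{g ∣ M} √g`, which is at most `(1 + log M) ∏ (1 + √q)`, the product being over the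
entries of the tuple. The inequality follows by completing the sum, from the bound
`|τ(χ, a)|² ≤ M gcd(a, M)` for Gauss sums. By Cauchy–Schwarz and
`∑_{2 < q ≤ y} (1 + √q)² ≤ y²`, all these tuples together contribute at most
`R ^ 6 (1 + log X) y ^ (2k) (∑ |a(q)|² / q) ^ k`. As `R ^ 6 y ^ (2k)` is at most
`X ^ (1 - 3 / (2 log log X))`, this is smaller than the diagonal term (`log_power_le`).
-/

/-! ### Gauss sums and the Pólya–Vinogradov inequality -/

/-- The twisted Gauss sums of a Dirichlet character `χ` modulo `M` satisfy
`|τ(χ, a)|² ≤ M · gcd(a, M)`, with no primitivity assumption: `|τ(χ, ·)|` is constant on the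
orbit of `a` under units, and the second moment of `v ↦ τ(χ, v a)` over all residues `v` is
computed by orthogonality. -/
lemma gaussSum_normSq_le {M : ℕ} [NeZero M] (χ : DirichletCharacter ℂ M) (a : ZMod M) :
    ‖gaussSum χ (AddChar.mulShift (ZMod.stdAddChar (N := M)) a)‖ ^ 2 ≤ M * (Nat.gcd a.val M : ℝ) := by
  classical
  set ψ := ZMod.stdAddChar (N := M) with hψ
  have hprim : ψ.IsPrimitive := ZMod.isPrimitive_stdAddChar M
  set G : ZMod M → ℂ := fun b => gaussSum χ (AddChar.mulShift ψ b) with hG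
  have hGdef : ∀ b, G b = ∑ x, χ x * ψ (b * x) := fun b => by
    simp [hG, gaussSum, AddChar.mulShift_apply]
  have hunit : ∀ u : (ZMod M)ˣ, ‖G (u * a)‖ = ‖G a‖ := by
    intro u
    have h := gaussSum_mulShift χ (AddChar.mulShift ψ a) u
    have h2 : AddChar.mulShift (AddChar.mulShift ψ a) (u : ZMod M) = AddChar.mulShift ψ (u * a) := by
      rw [AddChar.mulShift_mulShift, mul_comm]
    rw [h2] at h
    have h3 := congrArg norm h
    rw [norm_mul, DirichletCharacter.unit_norm_eq_one, one_mul] at h3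
    exact h3
  have hφpos : 0 < (Fintype.card (ZMod M)ˣ : ℝ) := by exact_mod_cast Fintype.card_pos
  have hlow : (Fintype.card (ZMod M)ˣ : ℝ) * ‖G a‖ ^ 2 ≤ ∑ v : ZMod M, ‖G (v * a)‖ ^ 2 := by
    calc (Fintype.card (ZMod M)ˣ : ℝ) * ‖G a‖ ^ 2 = ∑ u : (ZMod M)ˣ, ‖G (u * a)‖ ^ 2 := by
          simp [hunit]
      _ = ∑ v ∈ (Finset.univ : Finset (ZMod M)ˣ).map ⟨_, Units.val_injective⟩,
            ‖G (v * a)‖ ^ 2 := by simp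
      _ ≤ _ := Finset.sum_le_sum_of_subset_of_nonneg (Finset.subset_univ _)
          (fun _ _ _ => by positivity)
  have hgcd : ∀ x : ZMod M,
      ((Finset.univ.filter fun y : ZMod M => a * (x - y) = 0).card : ℝ) ≤ Nat.gcd a.val M := by
    intro x
    have hpos : 0 < Nat.gcd a.val M := Nat.gcd_pos_of_pos_right _ (NeZero.pos M)
    have hle := IsAddCyclic.card_nsmul_eq_zero_le (α := ZMod M) hpos
    refine le_trans ?_ (Nat.cast_le.2 hle)
    refine Nat.cast_le.2 (Finset.card_le_card_of_injOn (fun y => x - y) ?_ ?_)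
    · intro y hy
      simp only [Finset.coe_filter, Finset.mem_univ, true_and, Set.mem_ofPred_eq] at hy ⊢
      have hb := Nat.gcd_eq_gcd_ab a.val M
      have hb' : ((Nat.gcd a.val M : ℕ) : ZMod M) = a * (Nat.gcdA a.val M : ZMod M) := by
        have := congrArg (Int.cast : ℤ → ZMod M) hb
        push_cast at this
        simpa using this
      rw [nsmul_eq_mul, hb', mul_right_comm, hy, zero_mul]
    · intro y _ z _ h
      simpa using h
  have hconj : ∀ t : ZMod M, (starRingEnd ℂ) (ψ t) = ψ (-t) := by
    intro t
    rw [AddChar.map_neg_eq_inv, hψ, ZMod.stdAddChar_apply, ← Circle.coe_inv_eq_conj]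
    simp
  have hup : ((∑ v : ZMod M, ‖G (v * a)‖ ^ 2 : ℝ) : ℂ) =
      ∑ x, ∑ y, χ x * (starRingEnd ℂ) (χ y) * (if a * (x - y) = 0 then (M : ℂ) else 0) := by
    push_cast
    have : ∀ v : ZMod M, ((‖G (v * a)‖ : ℂ)) ^ 2 =
        ∑ x, ∑ y, χ x * (starRingEnd ℂ) (χ y) * ψ (v * (a * (x - y))) := by
      intro v
      rw [← Complex.mul_conj', hGdef, map_sum, Finset.sum_mul_sum]
      refine Finset.sum_congr rfl fun x _ => Finset.sum_congr rfl fun y _ => ?_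
      rw [map_mul (starRingEnd ℂ), hconj, mul_mul_mul_comm, ← AddChar.map_add_eq_mul]
      congr 2
      ring
    simp_rw [this]
    rw [Finset.sum_comm]
    refine Finset.sum_congr rfl fun x _ => ?_
    rw [Finset.sum_comm]
    refine Finset.sum_congr rfl fun y _ => ?_
    rw [← Finset.mul_sum, AddChar.sum_mulShift _ hprim]
    simp [ZMod.card]
  have hup2 : ∑ v : ZMod M, ‖G (v * a)‖ ^ 2 ≤
      (Fintype.card (ZMod M)ˣ : ℝ) * (M * (Nat.gcd a.val M : ℝ)) := by
    have h1 : ∑ v : ZMod M, ‖G (v * a)‖ ^ 2 =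
        ‖((∑ v : ZMod M, ‖G (v * a)‖ ^ 2 : ℝ) : ℂ)‖ := by
      rw [Complex.norm_real, Real.norm_of_nonneg]
      positivity
    rw [h1, hup]
    have hx : ∀ x : ZMod M, ‖∑ y, χ x * (starRingEnd ℂ) (χ y) *
        (if a * (x - y) = 0 then (M : ℂ) else 0)‖ ≤
        if IsUnit x then M * (Nat.gcd a.val M : ℝ) else 0 := by
      intro x
      split_ifs with h
      · refine (norm_sum_le _ _).trans ?_
        calc _ ≤ ∑ y : ZMod M, if a * (x - y) = 0 then (M : ℝ) else 0 := by
              refine Finset.sum_le_sum fun y _ => ?_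
              rw [norm_mul, norm_mul, RCLike.norm_conj]
              have h1 := χ.norm_le_one x
              have h2 := χ.norm_le_one y
              have h3 : ‖χ x‖ * ‖χ y‖ ≤ 1 := mul_le_one₀ h1 (norm_nonneg _) h2
              split_ifs
              · simp only [Complex.norm_natCast]
                exact mul_le_of_le_one_left (by positivity) h3
              · simp
          _ = M * ((Finset.univ.filter fun y : ZMod M => a * (x - y) = 0).card : ℝ) := by
              rw [← Finset.sum_filter, Finset.sum_const, nsmul_eq_mul, mul_comm]
          _ ≤ _ := mul_le_mul_of_nonneg_left (hgcd x) (Nat.cast_nonneg _)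
      · simp [χ.map_nonunit h]
    refine (norm_sum_le _ _).trans ((Finset.sum_le_sum fun x _ => hx x).trans ?_)
    rw [← Finset.sum_filter, Finset.sum_const, nsmul_eq_mul]
    refine le_of_eq ?_
    congr 2
    rw [← Finset.card_univ, ← Finset.card_map ⟨_, Units.val_injective⟩]
    congr 1
    ext x
    simp only [Finset.mem_filter, Finset.mem_univ, true_and, Finset.mem_map,
      Function.Embedding.coeFn_mk]
    rfl
  have := hlow.trans hup2
  exact le_of_mul_le_mul_left this hφpos

/-- A geometric sum over a nontrivial additive character of `ZMod M` is at most
`1 / |sin (π a / M)|`, hence at most `M / (2 min(a, M - a))`. -/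
lemma geom_stdAddChar_le {M : ℕ} [NeZero M] (N : ℕ) (a : ZMod M) (ha : a ≠ 0) :
    ‖∑ n ∈ Finset.Icc 1 N, ZMod.stdAddChar (N := M) (-((n : ZMod M) * a))‖ ≤
      (M : ℝ) / 2 * (1 / (a.val : ℝ) + 1 / ((M : ℝ) - a.val)) := by
  have hM : (0 : ℝ) < M := by exact_mod_cast NeZero.pos M
  have hv0 : (0 : ℝ) < a.val := by
    have : a.val ≠ 0 := by rwa [Ne, ZMod.val_eq_zero]
    exact_mod_cast Nat.pos_of_ne_zero this
  have hvM : (a.val : ℝ) < M := by exact_mod_cast ZMod.val_lt a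
  set z := ZMod.stdAddChar (N := M) (-a) with hz
  have hterm : ∀ n : ℕ, ZMod.stdAddChar (N := M) (-((n : ZMod M) * a)) = z ^ n := by
    intro n
    rw [hz, ← AddChar.map_nsmul_eq_pow, nsmul_eq_mul, mul_neg]
  simp_rw [hterm]
  have hznorm : ‖z‖ = 1 := by rw [hz, ZMod.stdAddChar_apply]; exact Circle.norm_coe _
  set θ : ℝ := a.val / M with hθ
  have hθ0 : 0 < θ := by positivity
  have hθ1 : θ < 1 := by rw [hθ, div_lt_one hM]; exact hvM
  have hz1 : ‖z - 1‖ = 2 * Real.sin (Real.pi * θ) := by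
    have e : z = (Complex.exp (Complex.I * ((2 * Real.pi * θ : ℝ) : ℂ)))⁻¹ := by
      rw [hz, AddChar.map_neg_eq_inv, ZMod.stdAddChar_apply, ZMod.toCircle_apply]
      congr 2
      rw [hθ]
      push_cast
      ring
    have h1 : ‖z - 1‖ = ‖Complex.exp (Complex.I * ((2 * Real.pi * θ : ℝ) : ℂ)) - 1‖ := by
      set w := Complex.exp (Complex.I * ((2 * Real.pi * θ : ℝ) : ℂ)) with hw
      have hw1 : ‖w‖ = 1 := Complex.norm_exp_I_mul_ofReal _
      have hw0 : w ≠ 0 := by intro h; simp [h] at hw1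
      have : z - 1 = - (w⁻¹ * (w - 1)) := by rw [e]; field_simp; ring
      rw [this, norm_neg, norm_mul, norm_inv, hw1]; simp
    have hs : 0 ≤ Real.sin (Real.pi * θ) :=
      Real.sin_nonneg_of_nonneg_of_le_pi (by positivity) (by nlinarith [Real.pi_pos])
    rw [h1, Complex.norm_exp_I_mul_ofReal_sub_one, Real.norm_of_nonneg]
    · congr 2; ring
    · rw [show 2 * Real.pi * θ / 2 = Real.pi * θ by ring]; positivity
  have hsin : 0 < Real.sin (Real.pi * θ) :=
    Real.sin_pos_of_pos_of_lt_pi (by positivity) (by nlinarith [Real.pi_pos])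
  have hinv : 1 / Real.sin (Real.pi * θ) ≤ 1 / 2 * (1 / θ + 1 / (1 - θ)) := by
    have hp := Real.pi_pos
    rcases le_total θ (1 / 2) with h | h
    · have hj := Real.mul_le_sin (x := Real.pi * θ) (by positivity) (by nlinarith)
      have hj' : 2 * θ ≤ Real.sin (Real.pi * θ) := by
        refine le_trans (le_of_eq ?_) hj; field_simp
      calc 1 / Real.sin (Real.pi * θ) ≤ 1 / (2 * θ) := one_div_le_one_div_of_le (by positivity) hj'
        _ = 1 / 2 * (1 / θ + 0) := by field_simp; ring
        _ ≤ _ := by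
          gcongr
          have : 0 < 1 - θ := by linarith
          positivity
    · have h1 : 0 < 1 - θ := by linarith
      have hj := Real.mul_le_sin (x := Real.pi * (1 - θ)) (by positivity) (by nlinarith)
      have hj' : 2 * (1 - θ) ≤ Real.sin (Real.pi * θ) := by
        rw [show Real.pi * (1 - θ) = Real.pi - Real.pi * θ by ring, Real.sin_pi_sub] at hj
        refine le_trans (le_of_eq ?_) hj; field_simp
      calc 1 / Real.sin (Real.pi * θ) ≤ 1 / (2 * (1 - θ)) :=
            one_div_le_one_div_of_le (by positivity) hj'
        _ = 1 / 2 * (0 + 1 / (1 - θ)) := by field_simp; ring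
        _ ≤ _ := by gcongr; positivity
  have hzne : z - 1 ≠ 0 := by
    intro h; rw [h, norm_zero] at hz1; linarith
  have hsum : ∑ n ∈ Finset.Icc 1 N, z ^ n = z * (z ^ N - 1) / (z - 1) := by
    rw [eq_div_iff hzne]
    induction N with
    | zero => simp
    | succ n ih => rw [Finset.sum_Icc_succ_top (by omega), add_mul, ih]; ring
  rw [hsum, norm_div, norm_mul, hznorm, one_mul, hz1]
  have hnum : ‖z ^ N - 1‖ ≤ 2 := by
    refine (norm_sub_le _ _).trans ?_
    rw [norm_pow, hznorm]; norm_num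
  calc ‖z ^ N - 1‖ / (2 * Real.sin (Real.pi * θ)) ≤ 2 / (2 * Real.sin (Real.pi * θ)) := by gcongr
    _ = 1 / Real.sin (Real.pi * θ) := by field_simp
    _ ≤ 1 / 2 * (1 / θ + 1 / (1 - θ)) := hinv
    _ = _ := by
      have : (M : ℝ) - a.val ≠ 0 := by linarith
      have h' : 1 - θ = (M - a.val) / M := by rw [hθ]; field_simp
      rw [h', hθ]
      field_simp

/-- Harmonic sum weighted by `√gcd(a, M)`, which is bounded by expanding over the common
divisors `g` of `a` and `M`. -/
lemma sum_sqrt_gcd_le {M : ℕ} (hM : 0 < M) :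
    ∑ a ∈ Finset.Ico 1 M, √(Nat.gcd a M : ℝ) / a ≤
      (1 + Real.log M) * (∑ g ∈ M.divisors, √(g : ℝ)) / √(M : ℝ) := by
  have h1 : ∀ a ∈ Finset.Ico 1 M, √(Nat.gcd a M : ℝ) / a ≤
      ∑ g ∈ M.divisors, if g ∣ a then √(g : ℝ) / a else 0 := by
    intro a ha
    have hmem : Nat.gcd a M ∈ M.divisors :=
      Nat.mem_divisors.2 ⟨Nat.gcd_dvd_right _ _, hM.ne'⟩
    refine le_trans (le_of_eq ?_) (Finset.single_le_sum
      (f := fun g : ℕ => if g ∣ a then √(g : ℝ) / a else 0)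
      (fun g _ => by split_ifs <;> positivity) hmem)
    rw [if_pos (Nat.gcd_dvd_left a M)]
  have hH : ∑ b ∈ Finset.Icc 1 M, (1 : ℝ) / b ≤ 1 + Real.log M := by
    have := harmonic_le_one_add_log M
    rw [harmonic_eq_sum_Icc] at this
    push_cast at this
    simpa using this
  refine (Finset.sum_le_sum h1).trans ?_
  rw [Finset.sum_comm]
  have h2 : ∀ g ∈ M.divisors, ∑ a ∈ Finset.Ico 1 M, (if g ∣ a then √(g : ℝ) / a else 0) ≤
      (1 + Real.log M) * (1 / √(g : ℝ)) := by
    intro g hg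
    have hgpos : 0 < g := Nat.pos_of_mem_divisors hg
    have hgR : (0 : ℝ) < g := by exact_mod_cast hgpos
    rw [← Finset.sum_filter]
    calc ∑ a ∈ (Finset.Ico 1 M).filter (fun a => g ∣ a), √(g : ℝ) / a
        ≤ ∑ a ∈ (Finset.Icc 1 M).image (fun b => g * b), √(g : ℝ) / a := by
          refine Finset.sum_le_sum_of_subset_of_nonneg ?_ (fun _ _ _ => by positivity)
          intro a ha
          simp only [Finset.mem_filter, Finset.mem_Ico, Finset.mem_image, Finset.mem_Icc] at ha ⊢
          obtain ⟨⟨h1, h2⟩, b, rfl⟩ := ha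
          refine ⟨b, ⟨Nat.pos_of_ne_zero (by rintro rfl; simp at h1), ?_⟩, rfl⟩
          nlinarith
      _ = ∑ b ∈ Finset.Icc 1 M, √(g : ℝ) / ((g * b : ℕ) : ℝ) :=
          Finset.sum_image (fun x _ y _ h => Nat.eq_of_mul_eq_mul_left hgpos h)
      _ = (∑ b ∈ Finset.Icc 1 M, (1 : ℝ) / b) * (1 / √(g : ℝ)) := by
          rw [Finset.sum_mul]
          refine Finset.sum_congr rfl fun b hb => ?_
          have hb' : (0 : ℝ) < b := by exact_mod_cast (Finset.mem_Icc.1 hb).1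
          have hs := Real.sq_sqrt hgR.le
          have hs0 : 0 < √(g : ℝ) := Real.sqrt_pos.2 hgR
          push_cast
          field_simp
          linarith
      _ ≤ _ := by gcongr
  refine (Finset.sum_le_sum h2).trans ?_
  rw [← Finset.mul_sum, mul_div_assoc]
  refine le_of_eq ?_
  congr 1
  rw [← Nat.sum_div_divisors M (fun g => 1 / √(g : ℝ)), Finset.sum_div]
  refine Finset.sum_congr rfl fun g hg => ?_
  have hgpos : (0 : ℝ) < g := by exact_mod_cast Nat.pos_of_mem_divisors hg
  rw [Nat.cast_div (Nat.dvd_of_mem_divisors hg) hgpos.ne', Real.sqrt_div (by positivity)]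
  simp

lemma sum_zmod_eq_sum_range {M : ℕ} [NeZero M] (f : ℕ → ℝ) :
    ∑ a : ZMod M, f a.val = ∑ a ∈ Finset.range M, f a := by
  refine Finset.sum_bij (fun a _ => a.val) (fun a _ => by simpa using ZMod.val_lt a)
    (fun a _ b _ h => ZMod.val_injective M h)
    (fun b hb => ⟨(b : ZMod M), Finset.mem_univ _, ZMod.val_cast_of_lt (by simpa using hb)⟩)
    (fun _ _ => rfl)

/-- A Pólya–Vinogradov inequality for every nontrivial Dirichlet character, primitive or not;
the price for imprimitivity is that `√M` is replaced by `∑_{g ∣ M} √g`. -/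
lemma polya_vinogradov {M : ℕ} [NeZero M] (χ : DirichletCharacter ℂ M) (hχ : χ ≠ 1) (N : ℕ) :
    ‖∑ n ∈ Finset.Icc 1 N, χ (n : ZMod M)‖ ≤
      (1 + Real.log M) * ∑ g ∈ M.divisors, √(g : ℝ) := by
  classical
  have hMpos : 0 < M := NeZero.pos M
  have hM : (0 : ℝ) < M := by exact_mod_cast hMpos
  set ψ := ZMod.stdAddChar (N := M) with hψ
  have hprim : ψ.IsPrimitive := ZMod.isPrimitive_stdAddChar M
  set G : ZMod M → ℂ := fun b => gaussSum χ (AddChar.mulShift ψ b) with hG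
  have hG0 : G 0 = 0 := by
    simp only [hG, AddChar.mulShift_zero, gaussSum, AddChar.one_apply, mul_one]
    exact MulChar.sum_eq_zero_of_ne_one hχ
  have hGle : ∀ a, ‖G a‖ ≤ √(M : ℝ) * √(Nat.gcd a.val M : ℝ) := by
    intro a
    rw [← Real.sqrt_mul hM.le]
    exact Real.le_sqrt_of_sq_le (gaussSum_normSq_le χ a)
  have hinv : ∀ n : ZMod M, (M : ℂ) * χ n = ∑ a, G a * ψ (-(n * a)) := by
    intro n
    simp only [hG, gaussSum, AddChar.mulShift_apply, Finset.sum_mul]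
    rw [Finset.sum_comm]
    have : ∀ x : ZMod M, ∑ a, χ x * ψ (a * x) * ψ (-(n * a)) =
        if x = n then (M : ℂ) * χ x else 0 := by
      intro x
      have : ∀ a, χ x * ψ (a * x) * ψ (-(n * a)) = χ x * ψ (a * (x - n)) := by
        intro a
        rw [mul_assoc, ← AddChar.map_add_eq_mul]
        congr 2; ring
      simp_rw [this]
      rw [← Finset.mul_sum, AddChar.sum_mulShift _ hprim]
      simp [sub_eq_zero, ZMod.card, mul_comm]
    simp_rw [this]
    simp
  have hkey : (M : ℂ) * ∑ n ∈ Finset.Icc 1 N, χ (n : ZMod M) =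
      ∑ a, G a * ∑ n ∈ Finset.Icc 1 N, ψ (-((n : ZMod M) * a)) := by
    rw [Finset.mul_sum]
    simp_rw [hinv, Finset.mul_sum]
    exact Finset.sum_comm
  set F : ℕ → ℝ := fun a => if a = 0 then 0 else
    √(M : ℝ) * √(Nat.gcd a M : ℝ) * ((M : ℝ) / 2 * (1 / (a : ℝ) + 1 / ((M : ℝ) - a))) with hF
  have hbound : (M : ℝ) * ‖∑ n ∈ Finset.Icc 1 N, χ (n : ZMod M)‖ ≤ ∑ a ∈ Finset.range M, F a := by
    have : (M : ℝ) * ‖∑ n ∈ Finset.Icc 1 N, χ (n : ZMod M)‖ =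
        ‖(M : ℂ) * ∑ n ∈ Finset.Icc 1 N, χ (n : ZMod M)‖ := by simp
    rw [this, hkey, ← sum_zmod_eq_sum_range F]
    refine (norm_sum_le _ _).trans (Finset.sum_le_sum fun a _ => ?_)
    by_cases ha : a = 0
    · simp [ha, hG0, hF]
    · have hav : a.val ≠ 0 := by rwa [Ne, ZMod.val_eq_zero]
      simp only [hF, if_neg hav]
      rw [norm_mul]
      exact mul_le_mul (hGle a) (geom_stdAddChar_le N a ha) (norm_nonneg _) (by positivity)
  have hsplit : ∑ a ∈ Finset.range M, F a =
      (M : ℝ) / 2 * √(M : ℝ) * (∑ a ∈ Finset.Ico 1 M, √(Nat.gcd a M : ℝ) / a +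
        ∑ a ∈ Finset.Ico 1 M, √(Nat.gcd a M : ℝ) / ((M : ℝ) - a)) := by
    rw [Finset.range_eq_Ico, Finset.sum_eq_sum_Ico_succ_bot hMpos, ← Finset.sum_add_distrib,
      Finset.mul_sum]
    simp only [hF, if_true, zero_add]
    refine Finset.sum_congr rfl fun a ha => ?_
    have : a ≠ 0 := by have := (Finset.mem_Ico.1 ha).1; omega
    rw [if_neg this]
    ring
  have hrefl : ∑ a ∈ Finset.Ico 1 M, √(Nat.gcd a M : ℝ) / ((M : ℝ) - a) =
      ∑ a ∈ Finset.Ico 1 M, √(Nat.gcd a M : ℝ) / a := by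
    refine Finset.sum_bij (fun a _ => M - a) (fun a ha => by simp at ha ⊢; omega)
      (fun a ha b hb h => by simp at ha hb; omega)
      (fun b hb => ⟨M - b, by simp at hb ⊢; omega, by simp at hb; omega⟩) (fun a ha => ?_)
    have hle : a ≤ M := (Finset.mem_Ico.1 ha).2.le
    have hg : Nat.gcd (M - a) M = Nat.gcd a M := by
      rw [Nat.gcd_comm, Nat.gcd_self_sub_right hle, Nat.gcd_comm]
    rw [hg, Nat.cast_sub hle]
  have hs := sum_sqrt_gcd_le hMpos
  have hsM : 0 < √(M : ℝ) := Real.sqrt_pos.2 hM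
  rw [hsplit, hrefl, ← two_mul] at hbound
  rw [le_div_iff₀ hsM] at hs
  refine le_of_mul_le_mul_left (hbound.trans ?_) hM
  calc _ = (M : ℝ) * ((∑ a ∈ Finset.Ico 1 M, √(Nat.gcd a M : ℝ) / a) * √(M : ℝ)) := by ring
    _ ≤ _ := by gcongr

/-! ### Sums of Jacobi symbols -/

/-- The Jacobi symbol `n ↦ (n / M)` as a Dirichlet character modulo `M`. -/
noncomputable def jacobiChar (M : ℕ) [NeZero M] : DirichletCharacter ℂ M where
  toFun x := (jacobiSym (x.val : ℤ) M : ℂ)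
  map_one' := by
    have h : jacobiSym (((1 : ZMod M).val : ℕ) : ℤ) M = 1 := by
      rw [ZMod.val_one_eq_one_mod]
      push_cast
      rw [← jacobiSym.mod_left]
      exact jacobiSym.one_left M
    rw [h, Int.cast_one]
  map_mul' x y := by
    rw [ZMod.val_mul]
    push_cast
    rw [← jacobiSym.mod_left, jacobiSym.mul_left]
    push_cast
    rfl
  map_nonunit' x hx := by
    have : jacobiSym (x.val : ℤ) M = 0 := by
      rw [jacobiSym.eq_zero_iff_not_coprime]
      intro h
      apply hx
      rw [← ZMod.natCast_zmod_val x, ZMod.isUnit_iff_coprime]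
      exact h
    rw [this, Int.cast_zero]

lemma jacobiChar_natCast (M : ℕ) [NeZero M] (n : ℕ) :
    jacobiChar M (n : ZMod M) = (jacobiSym (n : ℤ) M : ℂ) := by
  change ((jacobiSym (((n : ZMod M).val : ℕ) : ℤ) M : ℤ) : ℂ) = _
  rw [ZMod.val_natCast]
  push_cast
  rw [← jacobiSym.mod_left]

/-- If `M` is odd and not a square then some prime `q` divides it to an odd power, and the Chinese
remainder theorem supplies `n` with `(n / M) = -1`. -/
lemma exists_jacobiSym_eq_neg_one {M : ℕ} (hodd : Odd M) (hsq : ¬ IsSquare M) :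
    ∃ n : ℕ, jacobiSym (n : ℤ) M = -1 := by
  have hM0 : M ≠ 0 := by rintro rfl; simp at hodd
  obtain ⟨q, hq, hqodd⟩ : ∃ q, q.Prime ∧ Odd (M.factorization q) := by
    by_contra! h
    apply hsq
    refine ⟨M.factorization.prod fun p e => p ^ (e / 2), ?_⟩
    conv_lhs => rw [← Nat.prod_factorization_pow_eq_self hM0]
    rw [← Finsupp.prod_mul]
    refine Finsupp.prod_congr fun p hp => ?_
    have hp' : p.Prime := Nat.prime_of_mem_primeFactors (by simpa using hp)
    have := h p hp'
    rw [Nat.not_odd_iff_even] at this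
    obtain ⟨r, hr⟩ := this
    rw [hr, ← pow_add]
    congr 1
    omega
  have := Fact.mk hq
  have hq2 : q ≠ 2 := by
    rintro rfl
    have : M.factorization 2 = 0 :=
      Nat.factorization_eq_zero_of_not_dvd (by
        intro h; exact (Nat.not_even_iff_odd.2 hodd) (even_iff_two_dvd.2 h))
    rw [this] at hqodd
    simp at hqodd
  obtain ⟨r, hr⟩ := FiniteField.exists_nonsquare (F := ZMod q) (by rwa [ZMod.ringChar_zmod_n])
  have hMdecomp := Nat.ordProj_mul_ordCompl_eq_self M q
  set e := M.factorization q with he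
  set M' := M / q ^ e with hM'
  have hM'0 : M' ≠ 0 := by rintro h; rw [h] at hMdecomp; simp at hMdecomp; omega
  have hcop : Nat.Coprime q M' := Nat.coprime_ordCompl hq hM0
  obtain ⟨n, hn1, hn2⟩ := Nat.chineseRemainder hcop r.val 1
  refine ⟨n, ?_⟩
  have h1 : jacobiSym (n : ℤ) q = -1 := by
    rw [ZMod.nonsquare_iff_jacobiSym_eq_neg_one]
    have : ((n : ℤ) : ZMod q) = r := by
      have := (ZMod.natCast_eq_natCast_iff n r.val q).2 hn1
      simpa using this
    rwa [this]
  have h2 : jacobiSym (n : ℤ) M' = 1 := by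
    have : jacobiSym (n : ℤ) M' = jacobiSym (1 : ℤ) M' := by
      apply jacobiSym.mod_left'
      exact_mod_cast hn2
    rw [this, jacobiSym.one_left]
  rw [← hMdecomp, jacobiSym.mul_right' _ (pow_ne_zero _ hq.ne_zero) hM'0, jacobiSym.pow_right,
    h1, h2, hqodd.neg_one_pow, mul_one]

/-- The Pólya–Vinogradov bound for the Jacobi symbol modulo an odd non-square `M`. -/
lemma jacobi_sum_le {M : ℕ} (hodd : Odd M) (hsq : ¬ IsSquare M) (N : ℕ) :
    |∑ n ∈ Finset.Icc 1 N, (jacobiSym (n : ℤ) M : ℝ)| ≤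
      (1 + Real.log M) * ∑ g ∈ M.divisors, √(g : ℝ) := by
  have : NeZero M := ⟨by rintro rfl; simp at hodd⟩
  have hne : jacobiChar M ≠ 1 := by
    intro h
    obtain ⟨n, hn⟩ := exists_jacobiSym_eq_neg_one hodd hsq
    have h1 := jacobiChar_natCast M n
    rw [h, hn] at h1
    by_cases hu : IsUnit (n : ZMod M)
    · rw [MulChar.one_apply hu] at h1; norm_num at h1
    · rw [MulChar.map_nonunit _ hu] at h1; norm_num at h1
  have := polya_vinogradov (jacobiChar M) hne N
  simp_rw [jacobiChar_natCast] at this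
  rw [← Real.norm_eq_abs, ← Complex.norm_real]
  push_cast
  exact this

/-! ### The Selberg sieve -/

/-- Möbius inversion on the divisors of `g` that are multiples of `e`. -/
lemma sum_moebius_div {e g : ℕ} (he : 0 < e) (hg : 0 < g) :
    ∑ d ∈ g.divisors, (if e ∣ d then (ArithmeticFunction.moebius (g / d) : ℝ) else 0) =
      if e = g then 1 else 0 := by
  by_cases heg : e ∣ g
  · obtain ⟨m, rfl⟩ := heg
    have hm : 0 < m := Nat.pos_of_mul_pos_left hg
    have h1 : (∑ d ∈ (e * m).divisors,
        (if e ∣ d then (ArithmeticFunction.moebius (e * m / d) : ℝ) else 0)) =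
        ∑ d ∈ m.divisors, (ArithmeticFunction.moebius (m / d) : ℝ) := by
      rw [← Finset.sum_filter]
      symm
      refine Finset.sum_bij (fun d _ => e * d) ?_ ?_ ?_ ?_
      · intro d hd
        have := Nat.dvd_of_mem_divisors hd
        simp only [Finset.mem_filter, Nat.mem_divisors]
        exact ⟨⟨Nat.mul_dvd_mul_left e this, hg.ne'⟩, dvd_mul_right _ _⟩
      · intro a _ b _ h
        exact Nat.eq_of_mul_eq_mul_left he h
      · intro b hb
        simp only [Finset.mem_filter, Nat.mem_divisors] at hb
        obtain ⟨⟨h1, _⟩, c, rfl⟩ := hb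
        exact ⟨c, Nat.mem_divisors.2 ⟨Nat.dvd_of_mul_dvd_mul_left he h1, hm.ne'⟩, rfl⟩
      · intro d _
        rw [Nat.mul_div_mul_left _ _ he]
    have h2 : ∑ d ∈ m.divisors, (ArithmeticFunction.moebius d : ℝ) = if m = 1 then 1 else 0 := by
      have := congrArg (fun f : ArithmeticFunction ℤ => f m)
        ArithmeticFunction.coe_zeta_mul_moebius
      simp only [ArithmeticFunction.coe_zeta_mul_apply, ArithmeticFunction.one_apply] at this
      exact_mod_cast this
    rw [h1, Nat.sum_div_divisors m (fun d => (ArithmeticFunction.moebius d : ℝ)), h2]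
    have : (e = e * m) ↔ m = 1 := by
      constructor
      · intro h; nlinarith
      · rintro rfl; simp
    simp only [this]
  · have hne : e ≠ g := by rintro rfl; exact heg dvd_rfl
    rw [if_neg hne]
    refine Finset.sum_eq_zero fun d hd => if_neg fun h => heg (h.trans (Nat.dvd_of_mem_divisors hd))

/-- The normalising factor `J(R) = ∑_{g ≤ R} μ(g)² / φ(g)` of the Selberg sieve. -/
noncomputable def selJ (R : ℕ) : ℝ :=
  ∑ g ∈ Finset.Icc 1 R, (ArithmeticFunction.moebius g : ℝ) ^ 2 / (Nat.totient g : ℝ)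

/-- Pairs `(g, d)` with `g ≤ R` and `d ∣ g`. -/
def selS (R : ℕ) : Finset (Σ _ : ℕ, ℕ) := (Finset.Icc 1 R).sigma fun g => g.divisors

/-- The coefficient `μ(g) μ(g/d) / φ(g)` attached to a pair `(g, d)`. -/
noncomputable def selC (s : Σ _ : ℕ, ℕ) : ℝ :=
  (ArithmeticFunction.moebius s.1 : ℝ) / (Nat.totient s.1 : ℝ) *
    (ArithmeticFunction.moebius (s.1 / s.2) : ℝ)

/-- The sum `∑_{g ≤ R} μ(g) c_g(n) / φ(g)`, where `c_g(n) = ∑_{d ∣ (g, n)} d μ(g/d)` is the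
Ramanujan sum. Up to the factor `J(R)` this is the linear form whose square is Selberg's optimal
upper bound sieve weight of level `R`. -/
noncomputable def selT (R n : ℕ) : ℝ :=
  ∑ s ∈ selS R, if s.2 ∣ n then selC s * s.2 else 0

lemma selS_pos {R : ℕ} {s : Σ _ : ℕ, ℕ} (hs : s ∈ selS R) :
    0 < s.1 ∧ s.1 ≤ R ∧ 0 < s.2 ∧ s.2 ∣ s.1 ∧ s.2 ≤ R := by
  simp only [selS, Finset.mem_sigma, Finset.mem_Icc] at hs
  have h := Nat.dvd_of_mem_divisors hs.2
  exact ⟨hs.1.1, hs.1.2, Nat.pos_of_mem_divisors hs.2, h, (Nat.le_of_dvd hs.1.1 h).trans hs.1.2⟩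

lemma selT_prime {R p : ℕ} (hp : p.Prime) (hpR : R < p) : selT R p = selJ R := by
  unfold selT selS selJ
  rw [Finset.sum_sigma]
  refine Finset.sum_congr rfl fun g hg => ?_
  have hg' := Finset.mem_Icc.1 hg
  have h1 : (1 : ℕ) ∈ g.divisors := Nat.one_mem_divisors.2 (by omega)
  rw [Finset.sum_eq_single_of_mem 1 h1]
  · simp [selC]; ring
  · intro d hd hd1
    refine if_neg fun h => ?_
    rcases (Nat.dvd_prime hp).1 h with h | h
    · exact hd1 h
    · have := Nat.divisor_le hd
      change d = p at h
      omega

/-- Orthogonality of Ramanujan sums: the Selberg quadratic form takes the value `J(R)`. It is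
diagonalised by `d d' / [d, d'] = (d, d') = ∑_{e ∣ d, e ∣ d'} φ(e)`. -/
lemma sel_quadratic_form (R : ℕ) :
    ∑ s ∈ selS R, ∑ t ∈ selS R,
      (selC s * s.2) * (selC t * t.2) / (Nat.lcm s.2 t.2 : ℝ) = selJ R := by
  have hgcd : ∀ s ∈ selS R, ∀ t ∈ selS R,
      (selC s * s.2) * (selC t * t.2) / (Nat.lcm s.2 t.2 : ℝ) =
        ∑ e ∈ Finset.Icc 1 R, (Nat.totient e : ℝ) *
          ((if e ∣ s.2 then selC s else 0) * (if e ∣ t.2 then selC t else 0)) := by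
    intro s hs t ht
    obtain ⟨_, _, hs2, _, hsR⟩ := selS_pos hs
    obtain ⟨_, _, ht2, _, _⟩ := selS_pos ht
    have hl : (0 : ℝ) < Nat.lcm s.2 t.2 := by exact_mod_cast Nat.lcm_pos hs2 ht2
    have h1 : ((s.2 : ℝ) * t.2) = (Nat.gcd s.2 t.2 : ℝ) * Nat.lcm s.2 t.2 := by
      exact_mod_cast (Nat.gcd_mul_lcm s.2 t.2).symm
    have h2 : (Nat.gcd s.2 t.2 : ℝ) =
        ∑ e ∈ Finset.Icc 1 R, if e ∣ s.2 ∧ e ∣ t.2 then (Nat.totient e : ℝ) else 0 := by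
      conv_lhs => rw [← Nat.sum_totient (Nat.gcd s.2 t.2)]
      push_cast
      rw [← Finset.sum_filter]
      refine Finset.sum_congr ?_ fun _ _ => rfl
      ext e
      simp only [Nat.mem_divisors, Finset.mem_filter, Finset.mem_Icc, Nat.dvd_gcd_iff]
      constructor
      · rintro ⟨h, -⟩
        exact ⟨⟨Nat.pos_of_dvd_of_pos h.1 hs2, (Nat.le_of_dvd hs2 h.1).trans hsR⟩, h⟩
      · rintro ⟨-, h⟩
        exact ⟨h, (Nat.gcd_pos_of_pos_left _ hs2).ne'⟩
    rw [div_eq_iff hl.ne', show selC s * s.2 * (selC t * t.2) = selC s * selC t * (s.2 * t.2) by ring,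
      h1, ← mul_assoc, h2]
    congr 1
    rw [Finset.mul_sum]
    refine Finset.sum_congr rfl fun e _ => ?_
    by_cases ha : e ∣ s.2 <;> by_cases hb : e ∣ t.2 <;> simp [ha, hb]
    ring
  rw [Finset.sum_congr rfl fun s hs => Finset.sum_congr rfl fun t ht => hgcd s hs t ht]
  have hinner : ∀ e ∈ Finset.Icc 1 R, ∑ s ∈ selS R, (if e ∣ s.2 then selC s else 0) =
      (ArithmeticFunction.moebius e : ℝ) / (Nat.totient e : ℝ) := by
    intro e he
    have he' := Finset.mem_Icc.1 he
    unfold selS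
    rw [Finset.sum_sigma]
    have : ∀ g ∈ Finset.Icc 1 R, ∑ d ∈ g.divisors,
        (if e ∣ d then selC (⟨g, d⟩ : Σ _ : ℕ, ℕ) else 0) =
        if e = g then (ArithmeticFunction.moebius g : ℝ) / (Nat.totient g : ℝ) else 0 := by
      intro g hg
      have h := sum_moebius_div (e := e) (g := g) (by omega) (Finset.mem_Icc.1 hg).1
      calc _ = (ArithmeticFunction.moebius g : ℝ) / (Nat.totient g : ℝ) *
            ∑ d ∈ g.divisors, (if e ∣ d then (ArithmeticFunction.moebius (g / d) : ℝ) else 0) := by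
            rw [Finset.mul_sum]
            refine Finset.sum_congr rfl fun d _ => ?_
            simp only [selC, mul_ite, mul_zero]
        _ = _ := by rw [h]; simp
    rw [Finset.sum_congr rfl this]
    simp [he'.1, he'.2]
  calc _ = ∑ e ∈ Finset.Icc 1 R, (Nat.totient e : ℝ) *
        ((∑ s ∈ selS R, (if e ∣ s.2 then selC s else 0)) *
          (∑ t ∈ selS R, (if e ∣ t.2 then selC t else 0))) := by
        simp_rw [Finset.sum_mul_sum, Finset.mul_sum]
        rw [Finset.sum_congr rfl fun s _ => Finset.sum_comm]
        rw [Finset.sum_comm]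
    _ = _ := by
        refine Finset.sum_congr rfl fun e he => ?_
        rw [hinner e he]
        have : (0 : ℝ) < Nat.totient e := by
          exact_mod_cast Nat.totient_pos.2 (Finset.mem_Icc.1 he).1
        field_simp

lemma sel_abs_sum_le (R : ℕ) : ∑ s ∈ selS R, |selC s * s.2| ≤ (R : ℝ) ^ 3 := by
  unfold selS
  rw [Finset.sum_sigma]
  have hmu : ∀ n : ℕ, |(ArithmeticFunction.moebius n : ℝ)| ≤ 1 := fun n => by
    exact_mod_cast ArithmeticFunction.abs_moebius_le_one (n := n)
  have h : ∀ g ∈ Finset.Icc 1 R, ∑ d ∈ g.divisors, |selC (⟨g, d⟩ : Σ _ : ℕ, ℕ) * (d : ℝ)| ≤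
      (R : ℝ) ^ 2 := by
    intro g hg
    obtain ⟨hg1, hgR⟩ := Finset.mem_Icc.1 hg
    have hφ : (1 : ℝ) ≤ Nat.totient g := by exact_mod_cast Nat.totient_pos.2 hg1
    have h1 : ∀ d ∈ g.divisors, |selC (⟨g, d⟩ : Σ _ : ℕ, ℕ) * (d : ℝ)| ≤ R := by
      intro d hd
      have hdR : (d : ℝ) ≤ R := by exact_mod_cast (Nat.divisor_le hd).trans hgR
      have hc : |selC (⟨g, d⟩ : Σ _ : ℕ, ℕ)| ≤ 1 := by
        simp only [selC]
        rw [abs_mul, abs_div, Nat.abs_cast]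
        refine mul_le_one₀ ?_ (abs_nonneg _) (hmu _)
        exact div_le_one_of_le₀ ((hmu _).trans hφ) (by positivity)
      rw [abs_mul, Nat.abs_cast]
      calc _ ≤ 1 * (d : ℝ) := by gcongr
        _ ≤ R := by linarith
    refine (Finset.sum_le_sum h1).trans ?_
    rw [Finset.sum_const, nsmul_eq_mul, sq]
    gcongr
    exact (Nat.card_divisors_le_self g).trans hgR
  refine (Finset.sum_le_sum h).trans ?_
  rw [Finset.sum_const, nsmul_eq_mul, Nat.card_Icc]
  simp
  ring_nf
  rfl

lemma sum_inv_sq_le (R : ℕ) : ∑ b ∈ Finset.Icc 1 R, (1 : ℝ) / (b : ℝ) ^ 2 ≤ 2 := by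
  have h : ∀ n : ℕ, 1 ≤ n → ∑ b ∈ Finset.Icc 1 n, (1 : ℝ) / (b : ℝ) ^ 2 ≤ 2 - 1 / n := by
    intro n hn
    induction n, hn using Nat.le_induction with
    | base => norm_num
    | succ n hn ih =>
      rw [Finset.sum_Icc_succ_top (by omega)]
      have hn' : (0 : ℝ) < n := by exact_mod_cast hn
      have : (1 : ℝ) / ((n + 1 : ℕ) : ℝ) ^ 2 ≤ 1 / n - 1 / ((n + 1 : ℕ) : ℝ) := by
        push_cast
        rw [div_sub_div _ _ hn'.ne' (by positivity), div_le_div_iff₀ (by positivity) (by positivity)]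
        nlinarith
      linarith
  rcases Nat.eq_zero_or_pos R with rfl | hR
  · simp
  · have := h R hR
    have : (0 : ℝ) ≤ 1 / R := by positivity
    linarith

/-- Writing every `n ≤ R` as a square times a squarefree number shows
`log (R + 1) ≤ ∑_{n ≤ R} 1 / n ≤ 2 J(R)`. -/
lemma selJ_lower (R : ℕ) : Real.log (R + 1) ≤ 2 * selJ R := by
  have h1 := log_add_one_le_harmonic R
  rw [harmonic_eq_sum_Icc] at h1
  push_cast at h1
  refine h1.trans ?_
  have h2 : ∑ n ∈ Finset.Icc 1 R, ((n : ℝ))⁻¹ ≤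
      ∑ n ∈ (Finset.Icc 1 R ×ˢ ((Finset.Icc 1 R).filter Squarefree)).image
        (fun x : ℕ × ℕ => x.1 ^ 2 * x.2), ((n : ℝ))⁻¹ := by
    refine Finset.sum_le_sum_of_subset_of_nonneg ?_ (fun _ _ _ => by positivity)
    intro n hn
    obtain ⟨hn1, hnR⟩ := Finset.mem_Icc.1 hn
    obtain ⟨a, b, ha, hb, hab, hsq⟩ := Nat.sq_mul_squarefree_of_pos hn1
    simp only [Finset.mem_image, Finset.mem_product, Finset.mem_filter, Finset.mem_Icc,
      Prod.exists]
    refine ⟨b, a, ⟨⟨hb, ?_⟩, ⟨ha, ?_⟩, hsq⟩, hab⟩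
    · nlinarith
    · have : 1 ≤ b ^ 2 := Nat.one_le_pow _ _ hb
      nlinarith
  have h3 : ∑ n ∈ (Finset.Icc 1 R ×ˢ ((Finset.Icc 1 R).filter Squarefree)).image
        (fun x : ℕ × ℕ => x.1 ^ 2 * x.2), ((n : ℝ))⁻¹ ≤
      ∑ x ∈ Finset.Icc 1 R ×ˢ ((Finset.Icc 1 R).filter Squarefree),
        (((x.1 ^ 2 * x.2 : ℕ) : ℝ))⁻¹ :=
    Finset.sum_image_le_of_nonneg (f := fun n : ℕ => (n : ℝ)⁻¹) (fun _ _ => by positivity)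
  have h4 : ∑ x ∈ Finset.Icc 1 R ×ˢ ((Finset.Icc 1 R).filter Squarefree),
        (((x.1 ^ 2 * x.2 : ℕ) : ℝ))⁻¹ =
      (∑ b ∈ Finset.Icc 1 R, (1 : ℝ) / (b : ℝ) ^ 2) *
        ∑ a ∈ (Finset.Icc 1 R).filter Squarefree, ((a : ℝ))⁻¹ := by
    rw [Finset.sum_product, Finset.sum_mul_sum]
    refine Finset.sum_congr rfl fun b _ => Finset.sum_congr rfl fun a _ => ?_
    push_cast
    rw [mul_inv, one_div]
  have h5 : ∑ a ∈ (Finset.Icc 1 R).filter Squarefree, ((a : ℝ))⁻¹ ≤ selJ R := by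
    unfold selJ
    rw [Finset.sum_filter]
    refine Finset.sum_le_sum fun a ha => ?_
    have ha1 := (Finset.mem_Icc.1 ha).1
    have hφ : (0 : ℝ) < Nat.totient a := by exact_mod_cast Nat.totient_pos.2 ha1
    split_ifs with hs
    · have h : (ArithmeticFunction.moebius a : ℝ) ^ 2 = 1 := by
        exact_mod_cast ArithmeticFunction.moebius_sq_eq_one_of_squarefree hs
      rw [h, ← one_div]
      exact one_div_le_one_div_of_le hφ (by exact_mod_cast Nat.totient_le a)
    · positivity
  refine h2.trans (h3.trans ?_)
  rw [h4]
  exact mul_le_mul (sum_inv_sq_le R) h5 (Finset.sum_nonneg fun _ _ => by positivity) (by norm_num)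

/-- Selberg's upper bound sieve: a nonnegative weight `W` of level `R` that equals `1` at the primes
exceeding `R`, has density at most `2 / log (R + 1)`, and along which sums of `h` are controlled
by the sums of `h` over multiples. -/
lemma selberg_majorant {R : ℕ} (hR : 1 ≤ R) : ∃ W : ℕ → ℝ, (∀ n, 0 ≤ W n) ∧
    (∀ p : ℕ, p.Prime → R < p → W p = 1) ∧
    (∀ N : ℕ, ∑ n ∈ Finset.Icc 1 N, W n ≤ 2 * N / Real.log (R + 1) + (R : ℝ) ^ 6) ∧
    (∀ (N : ℕ) (h : ℕ → ℝ) (B : ℝ),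
      (∀ D : ℕ, 0 < D → |∑ n ∈ (Finset.Icc 1 N).filter (fun n => D ∣ n), h n| ≤ B) →
      |∑ n ∈ Finset.Icc 1 N, W n * h n| ≤ (R : ℝ) ^ 6 * B) := by
  have hJ1 : 1 ≤ selJ R := by
    unfold selJ
    refine le_trans (le_of_eq ?_) (Finset.single_le_sum
      (f := fun g : ℕ => (ArithmeticFunction.moebius g : ℝ) ^ 2 / (Nat.totient g : ℝ))
      (fun _ _ => by positivity) (Finset.mem_Icc.2 ⟨le_rfl, hR⟩))
    simp
  have hJ0 : 0 < selJ R := by linarith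
  have hJinv : |(selJ R)⁻¹ ^ 2| ≤ 1 := by
    rw [abs_of_nonneg (by positivity)]
    exact pow_le_one₀ (by positivity) (inv_le_one_of_one_le₀ hJ1)
  have hexp : ∀ (N : ℕ) (h : ℕ → ℝ), ∑ n ∈ Finset.Icc 1 N, (selT R n / selJ R) ^ 2 * h n =
      (selJ R)⁻¹ ^ 2 * ∑ s ∈ selS R, ∑ t ∈ selS R, (selC s * s.2) * (selC t * t.2) *
        ∑ n ∈ (Finset.Icc 1 N).filter (fun n => Nat.lcm s.2 t.2 ∣ n), h n := by
    intro N h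
    have : ∀ n, (selT R n / selJ R) ^ 2 * h n = (selJ R)⁻¹ ^ 2 *
        ∑ s ∈ selS R, ∑ t ∈ selS R, (selC s * s.2) * (selC t * t.2) *
          (if Nat.lcm s.2 t.2 ∣ n then h n else 0) := by
      intro n
      rw [div_pow, sq (selT R n), selT, Finset.sum_mul_sum, div_eq_mul_inv, ← inv_pow,
        mul_comm _ ((selJ R)⁻¹ ^ 2), mul_assoc, Finset.sum_mul]
      congr 1
      refine Finset.sum_congr rfl fun s _ => ?_
      rw [Finset.sum_mul]
      refine Finset.sum_congr rfl fun t _ => ?_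
      by_cases ha : s.2 ∣ n <;> by_cases hb : t.2 ∣ n <;> simp [ha, hb, Nat.lcm_dvd_iff]
    simp_rw [this]
    rw [← Finset.mul_sum, Finset.sum_comm]
    congr 1
    refine Finset.sum_congr rfl fun s _ => ?_
    rw [Finset.sum_comm]
    refine Finset.sum_congr rfl fun t _ => ?_
    rw [← Finset.mul_sum, Finset.sum_filter]
  have habs : ∀ (F : (Σ _ : ℕ, ℕ) → (Σ _ : ℕ, ℕ) → ℝ) (B : ℝ),
      (∀ s ∈ selS R, ∀ t ∈ selS R, |F s t| ≤ B) →
      |(selJ R)⁻¹ ^ 2 * ∑ s ∈ selS R, ∑ t ∈ selS R, (selC s * s.2) * (selC t * t.2) * F s t| ≤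
        (R : ℝ) ^ 6 * B := by
    intro F B hF
    rw [abs_mul]
    refine (mul_le_of_le_one_left (abs_nonneg _) hJinv).trans ?_
    refine (Finset.abs_sum_le_sum_abs _ _).trans ?_
    have hstep : ∑ s ∈ selS R, |∑ t ∈ selS R, (selC s * s.2) * (selC t * t.2) * F s t| ≤
        (∑ s ∈ selS R, |selC s * s.2|) * (∑ t ∈ selS R, |selC t * t.2|) * B := by
      rw [Finset.sum_mul_sum, Finset.sum_mul]
      refine Finset.sum_le_sum fun s hs => ?_
      rw [Finset.sum_mul]
      refine (Finset.abs_sum_le_sum_abs _ _).trans (Finset.sum_le_sum fun t ht => ?_)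
      rw [abs_mul, abs_mul]
      exact mul_le_mul_of_nonneg_left (hF s hs t ht) (by positivity)
    refine hstep.trans ?_
    have hB : 0 ≤ B := by
      have h1 : (⟨1, 1⟩ : Σ _ : ℕ, ℕ) ∈ selS R := by simp [selS, hR]
      exact (abs_nonneg _).trans (hF _ h1 _ h1)
    have h3 := sel_abs_sum_le R
    have h0 : 0 ≤ ∑ s ∈ selS R, |selC s * s.2| := Finset.sum_nonneg fun _ _ => abs_nonneg _
    calc _ ≤ (R : ℝ) ^ 3 * (R : ℝ) ^ 3 * B := by gcongr
      _ = _ := by ring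
  refine ⟨fun n => (selT R n / selJ R) ^ 2, fun n => sq_nonneg _, ?_, ?_, ?_⟩
  · intro p hp hpR
    simp only [selT_prime hp hpR, div_self hJ0.ne', one_pow]
  · intro N
    have h1 := hexp N (fun _ => 1)
    simp only [mul_one] at h1
    rw [h1]
    -- The number of multiples of `[d, d']` up to `N` is `N / [d, d'] + θ` with `|θ| ≤ 1`.
    set θ : (Σ _ : ℕ, ℕ) → (Σ _ : ℕ, ℕ) → ℝ := fun s t =>
      (∑ n ∈ (Finset.Icc 1 N).filter (fun n => Nat.lcm s.2 t.2 ∣ n), (1 : ℝ)) -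
        N / (Nat.lcm s.2 t.2 : ℝ) with hθ
    have hθ1 : ∀ s ∈ selS R, ∀ t ∈ selS R, |θ s t| ≤ 1 := by
      intro s hs t ht
      have hl : 0 < Nat.lcm s.2 t.2 :=
        Nat.lcm_pos (selS_pos hs).2.2.1 (selS_pos ht).2.2.1
      have hlR : (0 : ℝ) < Nat.lcm s.2 t.2 := by exact_mod_cast hl
      have hcard : ((Finset.Icc 1 N).filter (fun n => Nat.lcm s.2 t.2 ∣ n)).card =
          N / Nat.lcm s.2 t.2 := by
        rw [← Nat.Ioc_filter_dvd_card_eq_div]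
        rfl
      simp only [hθ, Finset.sum_const, nsmul_eq_mul, mul_one, hcard]
      rw [← Nat.floor_div_eq_div (K := ℝ), abs_le]
      have h1 := Nat.floor_le (a := (N : ℝ) / (Nat.lcm s.2 t.2 : ℝ)) (by positivity)
      have h2 := Nat.lt_floor_add_one ((N : ℝ) / (Nat.lcm s.2 t.2 : ℝ))
      constructor <;> linarith
    have hmain : (selJ R)⁻¹ ^ 2 * ∑ s ∈ selS R, ∑ t ∈ selS R, (selC s * s.2) * (selC t * t.2) *
        ∑ n ∈ (Finset.Icc 1 N).filter (fun n => Nat.lcm s.2 t.2 ∣ n), (1 : ℝ) =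
        N / selJ R + (selJ R)⁻¹ ^ 2 * ∑ s ∈ selS R, ∑ t ∈ selS R,
          (selC s * s.2) * (selC t * t.2) * θ s t := by
      have : ∀ s t : Σ _ : ℕ, ℕ, (selC s * s.2) * (selC t * t.2) *
          ∑ n ∈ (Finset.Icc 1 N).filter (fun n => Nat.lcm s.2 t.2 ∣ n), (1 : ℝ) =
          N * ((selC s * s.2) * (selC t * t.2) / (Nat.lcm s.2 t.2 : ℝ)) +
            (selC s * s.2) * (selC t * t.2) * θ s t := by
        intro s t
        simp only [hθ]
        ring
      simp_rw [this, Finset.sum_add_distrib, ← Finset.mul_sum]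
      rw [sel_quadratic_form]
      field_simp
    rw [hmain]
    have h2 := (le_abs_self _).trans (habs θ 1 hθ1)
    rw [mul_one] at h2
    have h3 : (N : ℝ) / selJ R ≤ 2 * N / Real.log (R + 1) := by
      have hR' : (1 : ℝ) ≤ R := by exact_mod_cast hR
      have hlog : 0 < Real.log ((R : ℝ) + 1) := Real.log_pos (by linarith)
      rw [div_le_div_iff₀ hJ0 hlog]
      have := mul_le_mul_of_nonneg_left (selJ_lower R) (Nat.cast_nonneg (α := ℝ) N)
      linarith
    linarith
  · intro N h B hB
    rw [hexp]
    refine habs (fun s t => ∑ n ∈ (Finset.Icc 1 N).filter (fun n => Nat.lcm s.2 t.2 ∣ n), h n) B ?_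
    intro s hs t ht
    exact hB _ (Nat.lcm_pos (selS_pos hs).2.2.1 (selS_pos ht).2.2.1)

/-! ### Moments against a sieve weight -/

lemma sum_fin_succ_pi {ι : Type*} [Fintype ι] {n : ℕ} (p : Fin (n + 1))
    (F : (Fin (n + 1) → ι) → ℝ) :
    ∑ t, F t = ∑ r : ι, ∑ u : Fin n → ι, F (p.insertNth (α := fun _ => ι) r u) := by
  rw [← Fintype.sum_prod_type', ← (Fin.insertNthEquiv (fun _ => ι) p).sum_comp]
  rfl

/-- The diagonal contribution: tuples of `2k` primes whose product is a square. In such a tuple the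
first prime recurs at one of the other `2k - 1` places, and deleting the two leaves
a tuple of the same kind, whence the factor `(2k - 1)!! = (2k)! / (2^k k!)`. -/
lemma sum_square_tuples_le {ι : Type*} [Fintype ι] (v : ι → ℕ) (hv : ∀ i, (v i).Prime)
    (hinj : Function.Injective v) (x : ι → ℝ) (hx : ∀ i, 0 ≤ x i) (k : ℕ) :
    ∑ t : Fin (2 * k) → ι, (if IsSquare (∏ i, v (t i)) then ∏ i, x (t i) else 0) ≤
      ((Nat.factorial (2 * k) : ℝ) / (2 ^ k * Nat.factorial k)) * (∑ i, x i ^ 2) ^ k := by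
  classical
  induction k with
  | zero => simp
  | succ k ih =>
    change ∑ t : Fin (2 * k + 1 + 1) → ι,
      (if IsSquare (∏ i, v (t i)) then ∏ i, x (t i) else 0) ≤ _
    set E := ∑ t : Fin (2 * k) → ι, (if IsSquare (∏ i, v (t i)) then ∏ i, x (t i) else 0) with hE
    rw [sum_fin_succ_pi 0]
    have hstep : ∀ q : ι, ∀ s : Fin (2 * k + 1) → ι,
        (if IsSquare (∏ i, v (Fin.insertNth (α := fun _ => ι) 0 q s i)) then
          ∏ i, x (Fin.insertNth (α := fun _ => ι) 0 q s i) else 0) ≤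
        ∑ j : Fin (2 * k + 1), if s j = q ∧ IsSquare (∏ i, v (s (j.succAbove i))) then
          x q * (x (s j) * ∏ i, x (s (j.succAbove i))) else 0 := by
      intro q s
      have hnn : ∀ j : Fin (2 * k + 1), 0 ≤
          if s j = q ∧ IsSquare (∏ i, v (s (j.succAbove i))) then
          x q * (x (s j) * ∏ i, x (s (j.succAbove i))) else 0 := by
        intro j
        split_ifs
        · exact mul_nonneg (hx _) (mul_nonneg (hx _) (Finset.prod_nonneg fun _ _ => hx _))
        · exact le_rfl
      rw [Fin.prod_univ_succAbove (fun i => v (Fin.insertNth (α := fun _ => ι) 0 q s i)) 0,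
        Fin.prod_univ_succAbove (fun i => x (Fin.insertNth (α := fun _ => ι) 0 q s i)) 0]
      simp only [Fin.insertNth_apply_same, Fin.insertNth_apply_succAbove]
      split_ifs with hsq
      · obtain ⟨j, hj⟩ : ∃ j, s j = q := by
          obtain ⟨r, hr⟩ := hsq
          have hd : v q ∣ r := by
            have : v q ∣ r * r := ⟨_, hr.symm⟩
            rcases (hv q).dvd_mul.1 this with h | h <;> exact h
          obtain ⟨m, rfl⟩ := hd
          have h2 : ∏ i, v (s i) = v q * (m * m) := by
            apply Nat.eq_of_mul_eq_mul_left (hv q).pos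
            rw [hr]; ring
          have h3 : v q ∣ ∏ i, v (s i) := ⟨_, h2⟩
          obtain ⟨j, -, hj⟩ := (hv q).prime.exists_mem_finset_dvd h3
          exact ⟨j, hinj ((Nat.prime_dvd_prime_iff_eq (hv q) (hv _)).1 hj).symm⟩
        refine le_trans (le_of_eq ?_) (Finset.single_le_sum (fun j _ => hnn j) (Finset.mem_univ j))
        have hsq' : IsSquare (∏ i, v (s (j.succAbove i))) := by
          rw [Fin.prod_univ_succAbove _ j, hj] at hsq
          obtain ⟨r, hr⟩ := hsq
          have hd : v q ∣ r := by
            have : v q ∣ r * r := ⟨_, hr.symm⟩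
            rcases (hv q).dvd_mul.1 this with h | h <;> exact h
          obtain ⟨m, rfl⟩ := hd
          refine ⟨m, ?_⟩
          apply Nat.eq_of_mul_eq_mul_left (Nat.mul_pos (hv q).pos (hv q).pos)
          rw [mul_assoc, hr]; ring
        rw [if_pos ⟨hj, hsq'⟩, Fin.prod_univ_succAbove _ j]
      · exact Finset.sum_nonneg fun j _ => hnn j
    have hval : ∀ j : Fin (2 * k + 1), ∑ q : ι, ∑ s : Fin (2 * k + 1) → ι,
        (if s j = q ∧ IsSquare (∏ i, v (s (j.succAbove i))) then
          x q * (x (s j) * ∏ i, x (s (j.succAbove i))) else 0) = (∑ i, x i ^ 2) * E := by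
      intro j
      rw [Finset.sum_mul]
      refine Finset.sum_congr rfl fun q _ => ?_
      rw [sum_fin_succ_pi j]
      simp only [Fin.insertNth_apply_same, Fin.insertNth_apply_succAbove]
      rw [Finset.sum_eq_single_of_mem q (Finset.mem_univ q)]
      · rw [hE, Finset.mul_sum]
        refine Finset.sum_congr rfl fun u _ => ?_
        simp only [true_and, mul_ite, mul_zero]
        split_ifs
        · ring
        · rfl
      · intro r _ hr
        exact Finset.sum_eq_zero fun u _ => if_neg fun h => hr h.1
    calc _ ≤ ∑ q : ι, ∑ s : Fin (2 * k + 1) → ι, ∑ j : Fin (2 * k + 1),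
          (if s j = q ∧ IsSquare (∏ i, v (s (j.succAbove i))) then
          x q * (x (s j) * ∏ i, x (s (j.succAbove i))) else 0) :=
          Finset.sum_le_sum fun q _ => Finset.sum_le_sum fun s _ => hstep q s
      _ = ∑ j : Fin (2 * k + 1), ∑ q : ι, ∑ s : Fin (2 * k + 1) → ι,
          (if s j = q ∧ IsSquare (∏ i, v (s (j.succAbove i))) then
          x q * (x (s j) * ∏ i, x (s (j.succAbove i))) else 0) := by
          rw [Finset.sum_congr rfl fun q _ => Finset.sum_comm]
          rw [Finset.sum_comm]
      _ = (2 * k + 1) * ((∑ i, x i ^ 2) * E) := by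
          simp_rw [hval]
          simp
      _ ≤ (2 * k + 1) * ((∑ i, x i ^ 2) *
            (((Nat.factorial (2 * k) : ℝ) / (2 ^ k * Nat.factorial k)) * (∑ i, x i ^ 2) ^ k)) := by
          have : 0 ≤ ∑ i, x i ^ 2 := Finset.sum_nonneg fun _ _ => sq_nonneg _
          gcongr
      _ = _ := by
          rw [show 2 * (k + 1) = 2 * k + 1 + 1 by ring, Nat.factorial_succ, Nat.factorial_succ,
            Nat.factorial_succ]
          have : (Nat.factorial k : ℝ) ≠ 0 := by exact_mod_cast Nat.factorial_ne_zero k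
          push_cast
          field_simp
          ring

lemma sum_sqrt_divisors_mul_le (m n : ℕ) :
    ∑ g ∈ (m * n).divisors, √(g : ℝ) ≤
      (∑ g ∈ m.divisors, √(g : ℝ)) * ∑ g ∈ n.divisors, √(g : ℝ) := by
  rw [Nat.divisors_mul, Finset.mul_def, Finset.sum_mul_sum, ← Finset.sum_product']
  refine (Finset.sum_image_le_of_nonneg (f := fun g : ℕ => √(g : ℝ))
    (fun _ _ => Real.sqrt_nonneg _)).trans (le_of_eq ?_)
  refine Finset.sum_congr rfl fun x _ => ?_
  push_cast
  rw [Real.sqrt_mul (by positivity)]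

lemma sum_sqrt_divisors_prod_le {κ : Type*} (s : Finset κ) (f : κ → ℕ)
    (hf : ∀ i ∈ s, (f i).Prime) :
    ∑ g ∈ (∏ i ∈ s, f i).divisors, √(g : ℝ) ≤ ∏ i ∈ s, (1 + √(f i : ℝ)) := by
  classical
  induction s using Finset.induction_on with
  | empty => simp
  | insert a s ha ih =>
    rw [Finset.prod_insert ha, Finset.prod_insert ha]
    refine (sum_sqrt_divisors_mul_le _ _).trans ?_
    have h1 : ∑ g ∈ (f a).divisors, √(g : ℝ) = 1 + √(f a : ℝ) := by
      have hp := hf a (Finset.mem_insert_self a s)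
      rw [hp.divisors, Finset.sum_pair hp.one_lt.ne]
      simp
    rw [h1]
    exact mul_le_mul_of_nonneg_left (ih fun i hi => hf i (Finset.mem_insert_of_mem hi))
      (by positivity)

lemma jacobiSym_prod_right {κ : Type*} (s : Finset κ) (f : κ → ℕ) (hf : ∀ i ∈ s, f i ≠ 0)
    (n : ℤ) : jacobiSym n (∏ i ∈ s, f i) = ∏ i ∈ s, jacobiSym n (f i) := by
  classical
  induction s using Finset.induction_on with
  | empty => simp
  | insert a s ha ih =>
    rw [Finset.prod_insert ha, Finset.prod_insert ha, jacobiSym.mul_right' _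
      (hf a (Finset.mem_insert_self a s))
      (Finset.prod_ne_zero_iff.2 fun i hi => hf i (Finset.mem_insert_of_mem hi)),
      ih fun i hi => hf i (Finset.mem_insert_of_mem hi)]

lemma abs_jacobiSym_le_one (n : ℤ) (M : ℕ) : |(jacobiSym n M : ℝ)| ≤ 1 := by
  rcases jacobiSym.trichotomy n M with h | h | h <;> simp [h]

/-- Sums of the Jacobi symbol over the multiples of `D`. -/
lemma jacobi_sum_multiples_le {M : ℕ} (hodd : Odd M) (hsq : ¬ IsSquare M) (N D : ℕ) (hD : 0 < D) :
    |∑ n ∈ (Finset.Icc 1 N).filter (fun n => D ∣ n), (jacobiSym (n : ℤ) M : ℝ)| ≤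
      (1 + Real.log M) * ∑ g ∈ M.divisors, √(g : ℝ) := by
  have h1 : ∑ n ∈ (Finset.Icc 1 N).filter (fun n => D ∣ n), (jacobiSym (n : ℤ) M : ℝ) =
      (jacobiSym (D : ℤ) M : ℝ) * ∑ m ∈ Finset.Icc 1 (N / D), (jacobiSym (m : ℤ) M : ℝ) := by
    rw [Finset.mul_sum]
    symm
    refine Finset.sum_bij (fun m _ => D * m) ?_ ?_ ?_ ?_
    · intro m hm
      obtain ⟨hm1, hm2⟩ := Finset.mem_Icc.1 hm
      simp only [Finset.mem_filter, Finset.mem_Icc, dvd_mul_right, and_true]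
      refine ⟨Nat.mul_pos hD hm1, ?_⟩
      rw [Nat.le_div_iff_mul_le hD] at hm2
      linarith
    · intro a _ b _ h
      exact Nat.eq_of_mul_eq_mul_left hD h
    · intro b hb
      simp only [Finset.mem_filter, Finset.mem_Icc] at hb
      obtain ⟨⟨hb1, hb2⟩, c, rfl⟩ := hb
      refine ⟨c, Finset.mem_Icc.2 ⟨Nat.pos_of_mul_pos_left hb1, ?_⟩, rfl⟩
      rw [Nat.le_div_iff_mul_le hD]
      linarith
    · intro m _
      push_cast
      rw [jacobiSym.mul_left]
      push_cast
      rfl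
  rw [h1, abs_mul]
  exact (mul_le_of_le_one_left (abs_nonneg _) (abs_jacobiSym_le_one _ _)).trans
    (jacobi_sum_le hodd hsq _)

/-- The `2k`-th moment of `∑ c_i (n / v_i)` against a sieve weight `W`: tuples of primes with square
product give the main term, all others are controlled by Pólya–Vinogradov. -/
lemma weighted_moment_le {ι : Type*} [Fintype ι] (v : ι → ℕ) (hv : ∀ i, (v i).Prime)
    (hv2 : ∀ i, v i ≠ 2) (hinj : Function.Injective v) (c : ι → ℂ) (k N : ℕ) (Y K A : ℝ)
    (hY1 : 1 ≤ Y) (hY : ∀ t : Fin k → ι, ((∏ i, v (t i) : ℕ) : ℝ) ≤ Y) (hK : 0 ≤ K)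
    (W : ℕ → ℝ) (hW0 : ∀ n, 0 ≤ W n) (hWA : ∑ n ∈ Finset.Icc 1 N, W n ≤ A)
    (hWh : ∀ (h : ℕ → ℝ) (B : ℝ),
      (∀ D : ℕ, 0 < D → |∑ n ∈ (Finset.Icc 1 N).filter (fun n => D ∣ n), h n| ≤ B) →
      |∑ n ∈ Finset.Icc 1 N, W n * h n| ≤ K * B) :
    ∑ n ∈ Finset.Icc 1 N, W n * ‖∑ i, c i * ((jacobiSym (n : ℤ) (v i) : ℝ) : ℂ)‖ ^ (2 * k) ≤
      A * (((Nat.factorial (2 * k) : ℝ) / (2 ^ k * Nat.factorial k)) * (∑ i, ‖c i‖ ^ 2) ^ k) +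
      K * (1 + 2 * Real.log Y) * ((∑ i, ‖c i‖ * (1 + √(v i : ℝ))) ^ k) ^ 2 := by
  classical
  have hA : 0 ≤ A := (Finset.sum_nonneg fun n _ => hW0 n).trans hWA
  have hlogY := Real.log_nonneg hY1
  set P : (Fin k → ι) → ℕ := fun t => ∏ i, v (t i) with hP
  set C : (Fin k → ι) → ℂ := fun t => ∏ i, c (t i) with hC
  have hP0 : ∀ t, P t ≠ 0 := fun t => Finset.prod_ne_zero_iff.2 fun i _ => (hv _).ne_zero
  have hPodd : ∀ t, Odd (P t) := fun t =>
    Finset.prod_induction _ Odd (fun _ _ => Odd.mul) odd_one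
      fun i _ => (hv (t i)).odd_of_ne_two (hv2 _)
  have hpow : ∀ n : ℕ, (∑ i, c i * ((jacobiSym (n : ℤ) (v i) : ℝ) : ℂ)) ^ k =
      ∑ t : Fin k → ι, C t * ((jacobiSym (n : ℤ) (P t) : ℝ) : ℂ) := by
    intro n
    rw [Fintype.sum_pow]
    refine Finset.sum_congr rfl fun t _ => ?_
    rw [Finset.prod_mul_distrib, hP, jacobiSym_prod_right _ _ fun i _ => (hv _).ne_zero]
    push_cast
    rfl
  have hnorm : ∀ n : ℕ,
      ((‖∑ i, c i * ((jacobiSym (n : ℤ) (v i) : ℝ) : ℂ)‖ ^ (2 * k) : ℝ) : ℂ) =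
      ∑ t : Fin k → ι, ∑ u : Fin k → ι, C t * (starRingEnd ℂ) (C u) *
        ((jacobiSym (n : ℤ) (P t * P u) : ℝ) : ℂ) := by
    intro n
    rw [mul_comm 2 k, pow_mul, ← norm_pow, Complex.ofReal_pow, ← Complex.mul_conj', hpow, map_sum,
      Finset.sum_mul_sum]
    refine Finset.sum_congr rfl fun t _ => Finset.sum_congr rfl fun u _ => ?_
    rw [map_mul, Complex.conj_ofReal, jacobiSym.mul_right' _ (hP0 t) (hP0 u)]
    push_cast
    ring
  have hsum : ((∑ n ∈ Finset.Icc 1 N,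
      W n * ‖∑ i, c i * ((jacobiSym (n : ℤ) (v i) : ℝ) : ℂ)‖ ^ (2 * k) : ℝ) : ℂ) =
      ∑ t : Fin k → ι, ∑ u : Fin k → ι, C t * (starRingEnd ℂ) (C u) *
        ((∑ n ∈ Finset.Icc 1 N, W n * (jacobiSym (n : ℤ) (P t * P u) : ℝ) : ℝ) : ℂ) := by
    rw [Complex.ofReal_sum]
    simp_rw [Complex.ofReal_mul, hnorm, Finset.mul_sum]
    rw [Finset.sum_comm]
    refine Finset.sum_congr rfl fun t _ => ?_
    rw [Finset.sum_comm]
    refine Finset.sum_congr rfl fun u _ => ?_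
    rw [Complex.ofReal_sum, Finset.mul_sum]
    refine Finset.sum_congr rfl fun n _ => ?_
    push_cast
    ring
  set X : (Fin k → ι) → ℝ := fun t => ∏ i, ‖c (t i)‖ with hX
  set H : (Fin k → ι) → ℝ := fun t => ∏ i, (1 + √(v (t i) : ℝ)) with hH
  have hX0 : ∀ t, 0 ≤ X t := fun t => Finset.prod_nonneg fun _ _ => norm_nonneg _
  have hH0 : ∀ t, 0 ≤ H t := fun t => Finset.prod_nonneg fun _ _ => by positivity
  have hCX : ∀ t, ‖C t‖ = X t := fun t => by simp [hC, hX, norm_prod]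
  have hinner : ∀ t u, |∑ n ∈ Finset.Icc 1 N, W n * (jacobiSym (n : ℤ) (P t * P u) : ℝ)| ≤
      (if IsSquare (P t * P u) then A else 0) + K * (1 + 2 * Real.log Y) * (H t * H u) := by
    intro t u
    have hnn : 0 ≤ K * (1 + 2 * Real.log Y) * (H t * H u) :=
      mul_nonneg (by positivity) (mul_nonneg (hH0 t) (hH0 u))
    split_ifs with hsq
    · refine le_trans ?_ (le_add_of_nonneg_right hnn)
      refine (Finset.abs_sum_le_sum_abs _ _).trans (le_trans (Finset.sum_le_sum fun n _ => ?_) hWA)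
      rw [abs_mul, abs_of_nonneg (hW0 n)]
      exact mul_le_of_le_one_right (hW0 n) (abs_jacobiSym_le_one _ _)
    · rw [zero_add]
      have h1 := hWh (fun n => (jacobiSym (n : ℤ) (P t * P u) : ℝ)) _
        fun D hD => jacobi_sum_multiples_le ((hPodd t).mul (hPodd u)) hsq N D hD
      refine h1.trans ?_
      rw [mul_assoc]
      refine mul_le_mul_of_nonneg_left ?_ hK
      have hlog : Real.log ((P t * P u : ℕ) : ℝ) ≤ 2 * Real.log Y := by
        have ht : (0 : ℝ) < P t := by exact_mod_cast Nat.pos_of_ne_zero (hP0 t)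
        have hu : (0 : ℝ) < P u := by exact_mod_cast Nat.pos_of_ne_zero (hP0 u)
        push_cast
        rw [Real.log_mul ht.ne' hu.ne']
        have h2 := Real.log_le_log ht (hY t)
        have h3 := Real.log_le_log hu (hY u)
        linarith
      have hdiv : ∑ g ∈ (P t * P u).divisors, √(g : ℝ) ≤ H t * H u := by
        refine (sum_sqrt_divisors_mul_le _ _).trans ?_
        exact mul_le_mul (sum_sqrt_divisors_prod_le _ _ fun i _ => hv _)
          (sum_sqrt_divisors_prod_le _ _ fun i _ => hv _)
          (Finset.sum_nonneg fun _ _ => Real.sqrt_nonneg _) (hH0 t)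
      exact mul_le_mul (by linarith) hdiv (Finset.sum_nonneg fun _ _ => Real.sqrt_nonneg _)
        (by positivity)
  have hdiag : ∑ t : Fin k → ι, ∑ u : Fin k → ι, (if IsSquare (P t * P u) then X t * X u else 0) ≤
      ((Nat.factorial (2 * k) : ℝ) / (2 ^ k * Nat.factorial k)) * (∑ i, ‖c i‖ ^ 2) ^ k := by
    have hD := sum_square_tuples_le v hv hinj (fun i => ‖c i‖) (fun _ => norm_nonneg _) k
    have hre : ∀ m, m = k + k → ∑ t : Fin m → ι,
        (if IsSquare (∏ i, v (t i)) then ∏ i, ‖c (t i)‖ else 0) =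
        ∑ t : Fin k → ι, ∑ u : Fin k → ι, (if IsSquare (P t * P u) then X t * X u else 0) := by
      rintro m rfl
      rw [← Fintype.sum_prod_type', ← (Fin.appendEquiv k k).sum_comp]
      refine Finset.sum_congr rfl fun x _ => ?_
      simp only [Fin.appendEquiv, Equiv.coe_fn_mk, Fin.prod_univ_add, Fin.append_left,
        Fin.append_right, hP, hX]
    rw [← hre (2 * k) (by ring)]
    exact hD
  have hreal : ∑ n ∈ Finset.Icc 1 N,
      W n * ‖∑ i, c i * ((jacobiSym (n : ℤ) (v i) : ℝ) : ℂ)‖ ^ (2 * k) ≤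
      ∑ t : Fin k → ι, ∑ u : Fin k → ι, X t * X u *
        ((if IsSquare (P t * P u) then A else 0) + K * (1 + 2 * Real.log Y) * (H t * H u)) := by
    refine (le_abs_self _).trans ?_
    rw [← Real.norm_eq_abs, ← Complex.norm_real, hsum]
    refine (norm_sum_le _ _).trans (Finset.sum_le_sum fun t _ => ?_)
    refine (norm_sum_le _ _).trans (Finset.sum_le_sum fun u _ => ?_)
    rw [norm_mul, norm_mul, RCLike.norm_conj, hCX, hCX, Complex.norm_real, Real.norm_eq_abs]
    exact mul_le_mul_of_nonneg_left (hinner t u) (mul_nonneg (hX0 t) (hX0 u))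
  refine hreal.trans ?_
  have hfac : (∑ i, ‖c i‖ * (1 + √(v i : ℝ))) ^ k = ∑ t : Fin k → ι, X t * H t := by
    rw [Fintype.sum_pow]
    exact Finset.sum_congr rfl fun t _ => Finset.prod_mul_distrib
  have hsplit : ∑ t : Fin k → ι, ∑ u : Fin k → ι, X t * X u *
        ((if IsSquare (P t * P u) then A else 0) + K * (1 + 2 * Real.log Y) * (H t * H u)) =
      A * (∑ t : Fin k → ι, ∑ u : Fin k → ι, (if IsSquare (P t * P u) then X t * X u else 0)) +
      K * (1 + 2 * Real.log Y) * (∑ t : Fin k → ι, X t * H t) ^ 2 := by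
    rw [sq, Finset.sum_mul_sum, Finset.mul_sum, Finset.mul_sum, ← Finset.sum_add_distrib]
    refine Finset.sum_congr rfl fun t _ => ?_
    rw [Finset.mul_sum, Finset.mul_sum, ← Finset.sum_add_distrib]
    refine Finset.sum_congr rfl fun u _ => ?_
    split_ifs <;> ring
  rw [hsplit, hfac]
  gcongr

/-! ### Moments over primes -/

lemma sum_one_add_sqrt_sq_le (m : ℕ) (hm : 1 ≤ m) :
    ∑ q ∈ (Finset.Iic m).filter (fun q => q.Prime ∧ 2 < q), (1 + √(q : ℝ)) ^ 2 ≤ (m : ℝ) ^ 2 := by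
  -- For odd `q ≥ 3`, `(1 + √q)² ≤ q² - (q - 2)²`, so the sum over odd numbers telescopes.
  have hterm : ∀ q : ℕ, 3 ≤ q → (1 + √(q : ℝ)) ^ 2 ≤ 4 * q - 4 := by
    intro q hq
    have hq' : (3 : ℝ) ≤ q := by exact_mod_cast hq
    have h1 := Real.sq_sqrt (show (0 : ℝ) ≤ q by positivity)
    have h2 : (5 / 3 : ℝ) ≤ √(q : ℝ) := by
      apply Real.le_sqrt_of_sq_le
      norm_num
      linarith
    nlinarith
  have hodd : ∀ j : ℕ,
      (∑ q ∈ (Finset.Iic (2 * j + 1)).filter (fun q => q.Prime ∧ 2 < q), (1 + √(q : ℝ)) ^ 2 ≤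
        ((2 * j + 1 : ℕ) : ℝ) ^ 2) := by
    intro j
    induction j with
    | zero =>
      rw [Finset.sum_eq_zero]
      · positivity
      · intro q hq
        simp only [Finset.mem_filter, Finset.mem_Iic] at hq
        omega
    | succ j ih =>
      have hsub : (Finset.Iic (2 * (j + 1) + 1)).filter (fun q => q.Prime ∧ 2 < q) ⊆
          insert (2 * (j + 1) + 1) ((Finset.Iic (2 * j + 1)).filter (fun q => q.Prime ∧ 2 < q)) := by
        intro q hq
        simp only [Finset.mem_insert, Finset.mem_filter, Finset.mem_Iic] at hq ⊢
        obtain ⟨h1, h2, h3⟩ := hq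
        have := h2.odd_of_ne_two (by omega)
        obtain ⟨r, hr⟩ := this
        by_cases h : q = 2 * (j + 1) + 1
        · exact Or.inl h
        · exact Or.inr ⟨by omega, h2, h3⟩
      refine (Finset.sum_le_sum_of_subset_of_nonneg hsub fun _ _ _ => by positivity).trans ?_
      rw [Finset.sum_insert (by simp)]
      have h3 := hterm (2 * (j + 1) + 1) (by omega)
      push_cast at h3 ih ⊢
      nlinarith
  rcases Nat.even_or_odd' m with ⟨j, rfl | rfl⟩
  · obtain ⟨i, rfl⟩ : ∃ i, j = i + 1 := ⟨j - 1, by omega⟩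
    have hsub : (Finset.Iic (2 * (i + 1))).filter (fun q => q.Prime ∧ 2 < q) ⊆
        (Finset.Iic (2 * i + 1)).filter (fun q => q.Prime ∧ 2 < q) := by
      intro q hq
      simp only [Finset.mem_filter, Finset.mem_Iic] at hq ⊢
      obtain ⟨h1, h2, h3⟩ := hq
      obtain ⟨r, hr⟩ := h2.odd_of_ne_two (by omega)
      exact ⟨by omega, h2, h3⟩
    refine (Finset.sum_le_sum_of_subset_of_nonneg hsub fun _ _ _ => by positivity).trans
      ((hodd i).trans ?_)
    gcongr
    omega
  · exact hodd j

/-- Powers of `log X` are absorbed by the saving `X ^ (-3 / (2 log log X))`. -/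
lemma log_power_le (v L : ℝ) (hv : 1 ≤ v) (hL : L = Real.log v) (hL1 : 1 ≤ L) :
    3 * (1 + v) * Real.exp (-(3 / 2 * v / L)) ≤ 1000 * (L / v) := by
  have hs := Real.sqrt_nonneg v
  have hsq := Real.sq_sqrt (show 0 ≤ v by linarith)
  set s := √v with hs'
  have hs1 : 1 ≤ s := Real.one_le_sqrt.2 hv
  have hLs : L ≤ 2 * s := by
    have h1 : L = 2 * Real.log s := by
      rw [hL, ← hsq, Real.log_pow]; norm_num
    have := Real.log_le_sub_one_of_pos (show 0 < s by linarith)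
    linarith
  have h2 : 3 / 4 * s ≤ 3 / 2 * v / L := by
    rw [le_div_iff₀ (by linarith), ← hsq]
    nlinarith
  have h3 : (3 / 4 * s) ^ 4 / 24 ≤ Real.exp (3 / 4 * s) := by
    have := Real.pow_div_factorial_le_exp (3 / 4 * s) (by positivity) 4
    simpa [Nat.factorial] using this
  have h4 : (81 / 6144 : ℝ) * v ^ 2 ≤ Real.exp (3 / 2 * v / L) := by
    refine le_trans (le_of_eq ?_) (h3.trans (Real.exp_le_exp.2 h2))
    rw [← hsq]; ring
  have hv0 : 0 < v := by linarith
  rw [Real.exp_neg, ← div_eq_mul_inv, div_le_iff₀ (Real.exp_pos _), mul_assoc]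
  have h5 : 1 / v * (81 / 6144 * v ^ 2) ≤ L / v * Real.exp (3 / 2 * v / L) := by
    gcongr
  have h6 : 1 / v * (81 / 6144 * v ^ 2) = 81 / 6144 * v := by field_simp
  nlinarith

/-- The moment bound for an arbitrary set `F` of primes `p ≤ X`, with the primes `q ≤ y` indexed as
`v i` and `a(q) / √q` replaced by arbitrary coefficients `c i`. The factor `log log X / log X` comes
from a sieve of level `X ^ (1 / (12 log log X))`. -/
lemma prime_moment_le {ι : Type*} [Fintype ι] (v : ι → ℕ) (hv : ∀ i, (v i).Prime)
    (hv2 : ∀ i, v i ≠ 2) (hinj : Function.Injective v) (c : ι → ℂ) (X y : ℝ) (k : ℕ)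
    (hX : 16 ≤ X) (hZ1 : 1 ≤ y ^ k)
    (hZ : y ^ k ≤ X ^ ((1 : ℝ) / 2 - (Real.log (Real.log X))⁻¹))
    (hvy : ∀ i, (v i : ℝ) ≤ y) (hsq : ∑ i, (1 + √(v i : ℝ)) ^ 2 ≤ y ^ 2)
    (F : Finset ℕ) (hF : ∀ p ∈ F, p.Prime ∧ p ≤ ⌊X⌋₊) (hL1 : 1 ≤ Real.log (Real.log X)) :
    ∑ p ∈ F, ‖∑ i, c i * ((jacobiSym (p : ℤ) (v i) : ℝ) : ℂ)‖ ^ (2 * k) ≤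
      1024 * (X * Real.log (Real.log X) / Real.log X) *
        ((Nat.factorial (2 * k) : ℝ) / (2 ^ k * Nat.factorial k)) * (∑ i, ‖c i‖ ^ 2) ^ k := by
  classical
  have hX0 : 0 < X := by linarith
  set V := Real.log X with hV
  set L := Real.log V with hL
  have hV1 : 1 ≤ V := by
    rw [hV, Real.le_log_iff_exp_le hX0]
    linarith [Real.exp_one_lt_d9]
  have hV0 : 0 < V := by linarith
  have hL0 : 0 < L := by linarith
  have hXexp : X = Real.exp V := (Real.exp_log hX0).symm
  set Z := y ^ k with hZdef
  have hZexp : Z ≤ Real.exp (V * (1 / 2 - L⁻¹)) := by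
    rwa [Real.rpow_def_of_pos hX0] at hZ
  have hlogZ : 2 * Real.log Z ≤ V := by
    have h1 := (Real.log_le_iff_le_exp (by linarith)).2 hZexp
    have h2 : 0 ≤ V * L⁻¹ := by positivity
    nlinarith
  have hZ2 : Z ^ 2 ≤ Real.exp (V - 2 * V / L) := by
    refine (pow_le_pow_left₀ (by linarith) hZexp 2).trans (le_of_eq ?_)
    rw [← Real.exp_nat_mul]
    congr 1
    push_cast
    field_simp
  -- The sieve level: `R ^ 6` is at most the saving `X ^ (1 / (2 log log X))`.
  set R := ⌊Real.exp (V / (12 * L))⌋₊ with hR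
  have hR1 : 1 ≤ R := Nat.floor_pos.2 (Real.one_le_exp (by positivity))
  have hRle : (R : ℝ) ≤ Real.exp (V / (12 * L)) := Nat.floor_le (Real.exp_pos _).le
  have hR1' : (1 : ℝ) ≤ R := by exact_mod_cast hR1
  have hR6 : (R : ℝ) ^ 6 ≤ Real.exp (V / (2 * L)) := by
    refine (pow_le_pow_left₀ (by positivity) hRle 6).trans (le_of_eq ?_)
    rw [← Real.exp_nat_mul]
    congr 1
    push_cast
    field_simp
    norm_num
  have hlogR : V / (12 * L) ≤ Real.log (R + 1) := by
    rw [Real.le_log_iff_exp_le (by positivity)]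
    exact (Nat.lt_floor_add_one _).le
  obtain ⟨W, hW0, hW1, hWA, hWh⟩ := selberg_majorant hR1
  set N := ⌊X⌋₊ with hN
  have hNX : (N : ℝ) ≤ X := Nat.floor_le hX0.le
  set S : ℕ → ℝ := fun n => ‖∑ i, c i * ((jacobiSym (n : ℤ) (v i) : ℝ) : ℂ)‖ ^ (2 * k) with hS
  set P := ∑ i, ‖c i‖ ^ 2 with hP
  set Q := ((∑ i, ‖c i‖ * (1 + √(v i : ℝ))) ^ k) ^ 2 with hQ
  set DF := (Nat.factorial (2 * k) : ℝ) / (2 ^ k * Nat.factorial k) with hDF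
  have hP0 : 0 ≤ P := Finset.sum_nonneg fun _ _ => sq_nonneg _
  have hQ0 : 0 ≤ Q := sq_nonneg _
  have hDF1 : 1 ≤ DF := by
    rw [hDF, one_le_div (by positivity)]
    exact_mod_cast Nat.two_pow_mul_factorial_le_factorial_two_mul k
  have hQle : Q ≤ P ^ k * Z ^ 2 := by
    have h1 : (∑ i, ‖c i‖ * (1 + √(v i : ℝ))) ^ 2 ≤ P * y ^ 2 :=
      (Finset.sum_mul_sq_le_sq_mul_sq _ _ _).trans (mul_le_mul_of_nonneg_left hsq hP0)
    calc Q = ((∑ i, ‖c i‖ * (1 + √(v i : ℝ))) ^ 2) ^ k := by rw [hQ, ← pow_mul, ← pow_mul, mul_comm]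
      _ ≤ (P * y ^ 2) ^ k := pow_le_pow_left₀ (sq_nonneg _) h1 k
      _ = P ^ k * Z ^ 2 := by rw [mul_pow, hZdef, ← pow_mul, ← pow_mul, mul_comm 2 k]
  have hS0 : ∀ n, 0 ≤ S n := fun n => by positivity
  have hSQ : ∀ n, S n ≤ Q := by
    intro n
    rw [hQ, ← pow_mul, mul_comm k 2]
    refine pow_le_pow_left₀ (norm_nonneg _) ?_ _
    refine (norm_sum_le _ _).trans (Finset.sum_le_sum fun i _ => ?_)
    rw [norm_mul, Complex.norm_real, Real.norm_eq_abs]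
    refine mul_le_mul_of_nonneg_left ?_ (norm_nonneg _)
    have := abs_jacobiSym_le_one (n : ℤ) (v i)
    have := Real.sqrt_nonneg (v i : ℝ)
    linarith
  have hY : ∀ t : Fin k → ι, ((∏ i, v (t i) : ℕ) : ℝ) ≤ Z := by
    intro t
    push_cast
    refine (Finset.prod_le_prod (fun _ _ => by positivity) fun i _ => hvy (t i)).trans
      (le_of_eq ?_)
    simp [hZdef]
  have hmom := weighted_moment_le v hv hv2 hinj c k N Z ((R : ℝ) ^ 6) _ hZ1 hY (by positivity) W hW0
    (hWA N) (fun h B => hWh N h B)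
  have hsmall : ∑ n ∈ Finset.Icc 1 N, (if n ≤ R then Q else 0) ≤ R * Q := by
    rw [← Finset.sum_filter, Finset.sum_const, nsmul_eq_mul]
    refine mul_le_mul_of_nonneg_right ?_ hQ0
    have : ((Finset.Icc 1 N).filter (fun n => n ≤ R)).card ≤ (Finset.Icc 1 R).card := by
      refine Finset.card_le_card fun n hn => ?_
      simp only [Finset.mem_filter, Finset.mem_Icc] at hn ⊢
      omega
    rw [Nat.card_Icc, Nat.add_sub_cancel] at this
    exact_mod_cast this
  have hLHS : ∑ p ∈ F, S p ≤ ∑ n ∈ Finset.Icc 1 N, W n * S n + R * Q := by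
    calc ∑ p ∈ F, S p ≤ ∑ p ∈ F, (W p * S p + if p ≤ R then Q else 0) := by
          refine Finset.sum_le_sum fun p hp => ?_
          have h0 := mul_nonneg (hW0 p) (hS0 p)
          split_ifs with h
          · linarith [hSQ p]
          · rw [hW1 p (hF p hp).1 (not_le.1 h)]; linarith
      _ ≤ ∑ p ∈ Finset.Icc 1 N, (W p * S p + if p ≤ R then Q else 0) := by
          refine Finset.sum_le_sum_of_subset_of_nonneg (fun p hp => ?_) fun p _ _ => ?_
          · exact Finset.mem_Icc.2 ⟨(hF p hp).1.one_lt.le, (hF p hp).2⟩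
          · have h0 := mul_nonneg (hW0 p) (hS0 p)
            split_ifs <;> linarith
      _ ≤ _ := by
          rw [Finset.sum_add_distrib]
          linarith
  refine hLHS.trans ?_
  have hPk : 0 ≤ P ^ k := pow_nonneg hP0 k
  have hA : 2 * (N : ℝ) / Real.log (R + 1) ≤ 24 * (X * L / V) := by
    have h1 : 2 * (N : ℝ) / Real.log (R + 1) ≤ 2 * X / (V / (12 * L)) := by
      gcongr
    refine h1.trans (le_of_eq ?_)
    field_simp
    norm_num
  have hRR : (R : ℝ) ≤ (R : ℝ) ^ 6 := le_self_pow₀ hR1' (by norm_num)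
  have hZ21 : 1 ≤ Z ^ 2 := one_le_pow₀ hZ1
  have hE : (R : ℝ) ^ 6 * Z ^ 2 ≤ X * Real.exp (-(3 / 2 * V / L)) := by
    calc (R : ℝ) ^ 6 * Z ^ 2 ≤ Real.exp (V / (2 * L)) * Real.exp (V - 2 * V / L) := by gcongr
      _ = Real.exp V * Real.exp (-(3 / 2 * V / L)) := by
        rw [← Real.exp_add, ← Real.exp_add]
        congr 1
        field_simp
        ring
      _ = _ := by rw [← hXexp]
  have hlog := log_power_le V L hV1 hL hL1
  have herr : 3 * (1 + V) * ((R : ℝ) ^ 6 * Z ^ 2) ≤ 1000 * (X * L / V) := by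
    calc 3 * (1 + V) * ((R : ℝ) ^ 6 * Z ^ 2)
        ≤ 3 * (1 + V) * (X * Real.exp (-(3 / 2 * V / L))) := by gcongr
      _ = X * (3 * (1 + V) * Real.exp (-(3 / 2 * V / L))) := by ring
      _ ≤ X * (1000 * (L / V)) := by gcongr
      _ = _ := by ring
  have hPD : P ^ k ≤ DF * P ^ k := le_mul_of_one_le_left hPk hDF1
  set G := (R : ℝ) ^ 6 with hG
  have hG0 : 0 ≤ G := by positivity
  have hQ' : Q ≤ DF * P ^ k * Z ^ 2 := hQle.trans (by gcongr)
  calc _ ≤ (2 * (N : ℝ) / Real.log (R + 1) + G) * (DF * P ^ k) +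
        G * (1 + 2 * Real.log Z) * Q + R * Q := by linarith
    _ ≤ (24 * (X * L / V) + G * Z ^ 2) * (DF * P ^ k) +
        G * (1 + V) * (DF * P ^ k * Z ^ 2) + G * (DF * P ^ k * Z ^ 2) := by
        have hDP : 0 ≤ DF * P ^ k := by positivity
        have h2 : G ≤ G * Z ^ 2 := le_mul_of_one_le_right hG0 hZ21
        have hlZ := Real.log_nonneg hZ1
        gcongr
    _ = (24 * (X * L / V) + (3 + V) * (G * Z ^ 2)) * (DF * P ^ k) := by ring
    _ ≤ (24 * (X * L / V) + 1000 * (X * L / V)) * (DF * P ^ k) := by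
        have h3 : (3 + V) * (G * Z ^ 2) ≤ 3 * (1 + V) * (G * Z ^ 2) := by
          gcongr
          linarith
        refine mul_le_mul_of_nonneg_right ?_ (by positivity)
        linarith
    _ = _ := by ring


/-- Mean values of Dirichlet polynomials over primes `p ≡ 1 (mod 8)` (Lemma 9.?): there is
an absolute constant `C` such that for real `X ≥ 16`, real `y`, and a natural number `k`
with `y^k ≤ X^{1/2 - 1/log log X}`, and any complex coefficients `a(q)`,
`∑_{p ≤ X, p ≡ 1 (8)} |∑_{2 < q ≤ y prime} a(q) χ_p(q) q^{-1/2}|^{2k}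
  ≪ (X log log X / log X) ((2k)!/(2^k k!)) (∑_{q ≤ y prime} |a(q)|²/q)^k`,
where `χ_p(q) = (p/q)` is the Jacobi symbol. -/
theorem statement19 :
    ∃ C : ℝ, 0 < C ∧ ∀ X y : ℝ, 16 ≤ X → ∀ k : ℕ,
      y ^ k ≤ X ^ ((1 : ℝ) / 2 - (Real.log (Real.log X))⁻¹) →
      ∀ a : ℕ → ℂ,
        (∑ p ∈ (Finset.Iic ⌊X⌋₊).filter (fun p => p.Prime ∧ p % 8 = 1),
            ‖∑ q ∈ (Finset.Iic ⌊y⌋₊).filter (fun q => q.Prime ∧ 2 < q),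
                a q * ((jacobiSym (p : ℤ) q : ℝ) : ℂ) / Real.sqrt q‖ ^ (2 * k)) ≤
          C * (X * Real.log (Real.log X) / Real.log X) *
            ((Nat.factorial (2 * k) : ℝ) / (2 ^ k * Nat.factorial k)) *
            (∑ q ∈ (Finset.Iic ⌊y⌋₊).filter Nat.Prime, ‖a q‖ ^ 2 / q) ^ k := by
  refine ⟨1024, by norm_num, fun X y hX k hyk a => ?_⟩
  have hX0 : 0 < X := by linarith
  have hVe : Real.exp 1 ≤ Real.log X := by
    have h1 : Real.log 16 = 4 * Real.log 2 := by
      rw [show (16 : ℝ) = 2 ^ 4 by norm_num, Real.log_pow]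
      norm_num
    have h2 := Real.log_le_log (by norm_num) hX
    linarith [Real.exp_one_lt_d9, Real.log_two_gt_d9]
  have hV0 : 0 < Real.log X := (Real.exp_pos 1).trans_le hVe
  have hL1 : 1 ≤ Real.log (Real.log X) := (Real.le_log_iff_exp_le hV0).2 hVe
  have hL0 : 0 < Real.log (Real.log X) := by linarith
  set Q := (Finset.Iic ⌊y⌋₊).filter (fun q => q.Prime ∧ 2 < q) with hQ
  have hpos : 0 ≤ ∑ q ∈ (Finset.Iic ⌊y⌋₊).filter Nat.Prime, ‖a q‖ ^ 2 / (q : ℝ) :=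
    Finset.sum_nonneg fun _ _ => by positivity
  by_cases hZ1 : 1 ≤ y ^ k
  swap
  -- Here `y < 1` and `k ≠ 0`, so there are no primes `q ≤ y` and the left side vanishes.
  · have hk : k ≠ 0 := by
      rintro rfl
      simp at hZ1
    have hy : y < 1 := by
      by_contra! h
      exact hZ1 (one_le_pow₀ h)
    have hQe : Q = ∅ := by
      rw [hQ, Nat.floor_eq_zero.2 hy]
      ext q
      simp only [Finset.mem_filter, Finset.mem_Iic, Finset.notMem_empty, iff_false]
      omega
    rw [hQe]
    simp only [Finset.sum_empty, norm_zero]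
    rw [zero_pow (by omega), Finset.sum_const_zero]
    positivity
  have hmem : ∀ i : Q, (i : ℕ).Prime ∧ 2 < (i : ℕ) ∧ (i : ℕ) ≤ ⌊y⌋₊ := by
    intro i
    have := i.2
    simp only [hQ, Finset.mem_filter, Finset.mem_Iic] at this
    tauto
  have hvy : ∀ i : Q, ((i : ℕ) : ℝ) ≤ y := fun i =>
    (Nat.le_floor_iff' (hmem i).1.ne_zero).1 (hmem i).2.2
  have hsq : ∑ i : Q, (1 + √((i : ℕ) : ℝ)) ^ 2 ≤ y ^ 2 := by
    rw [Finset.sum_coe_sort Q (fun q : ℕ => (1 + √(q : ℝ)) ^ 2)]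
    rcases Nat.eq_zero_or_pos ⌊y⌋₊ with h0 | h0
    · rw [Finset.sum_eq_zero]
      · positivity
      · intro q hq
        simp only [hQ, Finset.mem_filter, Finset.mem_Iic] at hq
        omega
    · have hy1 := Nat.floor_pos.1 h0
      have := Nat.floor_le (show 0 ≤ y by linarith)
      refine (sum_one_add_sqrt_sq_le _ h0).trans ?_
      gcongr
  have hmain := prime_moment_le (fun i : Q => (i : ℕ)) (fun i => (hmem i).1)
    (fun i => (hmem i).2.1.ne') Subtype.val_injective (fun i => a i / (Real.sqrt (i : ℕ) : ℂ)) X y k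
    hX hZ1 hyk hvy hsq ((Finset.Iic ⌊X⌋₊).filter (fun p => p.Prime ∧ p % 8 = 1))
    (fun p hp => by
      simp only [Finset.mem_filter, Finset.mem_Iic] at hp
      exact ⟨hp.2.1, hp.1⟩) hL1
  have hinner : ∀ p : ℕ, ∑ q ∈ Q, a q * ((jacobiSym (p : ℤ) q : ℝ) : ℂ) / Real.sqrt q =
      ∑ i : Q, a i / (Real.sqrt (i : ℕ) : ℂ) * ((jacobiSym (p : ℤ) (i : ℕ) : ℝ) : ℂ) := by
    intro p
    rw [← Finset.sum_coe_sort Q]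
    exact Finset.sum_congr rfl fun i _ => by ring
  have hc : ∑ i : Q, ‖a i / (Real.sqrt (i : ℕ) : ℂ)‖ ^ 2 ≤
      ∑ q ∈ (Finset.Iic ⌊y⌋₊).filter Nat.Prime, ‖a q‖ ^ 2 / (q : ℝ) := by
    rw [Finset.sum_coe_sort Q (fun q : ℕ => ‖a q / (Real.sqrt q : ℂ)‖ ^ 2)]
    have h1 : ∀ q : ℕ, ‖a q / (Real.sqrt q : ℂ)‖ ^ 2 = ‖a q‖ ^ 2 / (q : ℝ) := by
      intro q
      rw [norm_div, div_pow, Complex.norm_real, Real.norm_eq_abs, sq_abs,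
        Real.sq_sqrt (Nat.cast_nonneg q)]
    simp_rw [h1]
    refine Finset.sum_le_sum_of_subset_of_nonneg (fun q hq => ?_) fun _ _ _ => by positivity
    simp only [hQ, Finset.mem_filter] at hq ⊢
    exact ⟨hq.1, hq.2.1⟩
  simp_rw [hinner]
  refine hmain.trans ?_
  gcongr
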